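/- Let G be a plane graph with outer cycle C, let P = p1p2 be a path of length one contained in C, and let L be a list assignment for G such that |L(v)| ≥ 5 for every v ∈ V(G) − V(C), |L(v)| ≥ 3 for every v ∈ V(C) − V(P), |L(p1)| ≥ 1, |L(p2)| ≥ 1, and L(p1) ≠ L(p2). Then G has an L-coloring. -/

import Mathlib

/-!
Common definitions: plane graphs (given by a concrete embedding in the plane),
outer face, canvases, list colorings, governments, harmonicas and coloring
harmonicas, following Postle–Thomas,
"Five-list-coloring graphs on surfaces III".
-/

open Set

universe u

/-- A finite simple graph together with an embedding in the plane:
each vertex gets a point, each edge a simple arc joining its endpoints;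
arcs avoid other vertices, and two distinct edges meet only in common
endpoints. -/
structure PlaneGraph (V : Type u) where
  verts : Set V
  Adj : V → V → Prop
  finite_verts : verts.Finite
  adj_symm : ∀ u v, Adj u v → Adj v u
  adj_irrefl : ∀ v, ¬Adj v v
  adj_mem : ∀ u v, Adj u v → u ∈ verts
  pos : V → ℝ × ℝ
  arc : Sym2 V → Set (ℝ × ℝ)
  pos_injOn : Set.InjOn pos verts
  arc_arc : ∀ u v, Adj u v → ∃ f : ℝ → ℝ × ℝ,
    ContinuousOn f (Set.Icc 0 1) ∧ Set.InjOn f (Set.Icc 0 1) ∧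
    f '' Set.Icc 0 1 = arc s(u, v) ∧ f 0 = pos u ∧ f 1 = pos v
  arc_avoid : ∀ u v, Adj u v → ∀ w ∈ verts, pos w ∈ arc s(u, v) → w = u ∨ w = v
  arc_meet : ∀ u v x y, Adj u v → Adj x y → s(u, v) ≠ s(x, y) →
    arc s(u, v) ∩ arc s(x, y) ⊆ pos '' (({u, v} : Set V) ∩ ({x, y} : Set V))

namespace PlaneGraph

variable {V : Type u}

/-- The point set of the drawing of the plane graph. -/
def image (G : PlaneGraph V) : Set (ℝ × ℝ) :=
  G.pos '' G.verts ∪ ⋃ (u : V) (v : V) (_ : G.Adj u v), G.arc s(u, v)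

/-- The outer (unbounded) face of the drawing. -/
def outerFace (G : PlaneGraph V) : Set (ℝ × ℝ) :=
  {p | p ∉ G.image ∧ ¬Bornology.IsBounded (connectedComponentIn G.imageᶜ p)}

/-- A vertex incident with (i.e. on the boundary of) the outer face. -/
def OnOuter (G : PlaneGraph V) (v : V) : Prop := G.pos v ∈ frontier G.outerFace

/-- An edge incident with (i.e. on the boundary of) the outer face. -/
def EdgeOnOuter (G : PlaneGraph V) (u v : V) : Prop :=
  G.arc s(u, v) ⊆ frontier G.outerFace

/-- The vertices of the boundary of the outer face. -/
def boundaryVerts (G : PlaneGraph V) : Set V := {v | v ∈ G.verts ∧ G.OnOuter v}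

/-- Connectivity of a plane graph. -/
def Connected (G : PlaneGraph V) : Prop :=
  G.verts.Nonempty ∧ ∀ u ∈ G.verts, ∀ v ∈ G.verts, Relation.ReflTransGen G.Adj u v

/-- `H` is a (plane) subgraph of `G`, drawn the same way. -/
def IsSubgraph (H G : PlaneGraph V) : Prop :=
  H.verts ⊆ G.verts ∧ (∀ u v, H.Adj u v → G.Adj u v) ∧
  (∀ v ∈ H.verts, H.pos v = G.pos v) ∧
  (∀ u v, H.Adj u v → H.arc s(u, v) = G.arc s(u, v))

/-- Delete a set of vertices (and all incident edges) from a plane graph. -/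
def deleteVerts (G : PlaneGraph V) (s : Set V) : PlaneGraph V where
  verts := G.verts \ s
  Adj u v := G.Adj u v ∧ u ∉ s ∧ v ∉ s
  finite_verts := G.finite_verts.subset Set.diff_subset
  adj_symm := fun u v h => ⟨G.adj_symm u v h.1, h.2.2, h.2.1⟩
  adj_irrefl := fun v h => G.adj_irrefl v h.1
  adj_mem := fun u v h => ⟨G.adj_mem u v h.1, h.2.1⟩
  pos := G.pos
  arc := G.arc
  pos_injOn := G.pos_injOn.mono Set.diff_subset
  arc_arc := fun u v h => G.arc_arc u v h.1
  arc_avoid := fun u v h w hw hm => G.arc_avoid u v h.1 w hw.1 hm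
  arc_meet := fun u v x y h h' hne => G.arc_meet u v x y h.1 h'.1 hne

/-- `G` has a proper coloring from the lists `L`. -/
def HasLColoring (G : PlaneGraph V) (L : V → Finset ℕ) : Prop :=
  ∃ φ : V → ℕ, (∀ v ∈ G.verts, φ v ∈ L v) ∧ ∀ u v, G.Adj u v → φ u ≠ φ v

/-- A vertex of degree exactly one. -/
def DegreeOne (G : PlaneGraph V) (x : V) : Prop :=
  (∃ a, G.Adj x a) ∧ ∀ a b, G.Adj x a → G.Adj x b → a = b

end PlaneGraph

/-- The cyclic successor of an index in a list. -/
def cycNext {V : Type u} (C : List V) (i : Fin C.length) : Fin C.length :=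
  ⟨((i : ℕ) + 1) % C.length, Nat.mod_lt _ (lt_of_le_of_lt (Nat.zero_le _) i.isLt)⟩

/-- The list `C` is a cycle of `G` whose image is exactly the boundary of the
outer face of `G`; i.e. `G` is a plane graph with outer cycle `C`. -/
def PlaneGraph.IsOuterCycle {V : Type u} (G : PlaneGraph V) (C : List V) : Prop :=
  C.Nodup ∧ 3 ≤ C.length ∧ (∀ v ∈ C, v ∈ G.verts) ∧
  (∀ i : Fin C.length, G.Adj (C.get i) (C.get (cycNext C i))) ∧
  frontier G.outerFace =
    G.pos '' {v | v ∈ C} ∪ ⋃ i : Fin C.length, G.arc s(C.get i, C.get (cycNext C i))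

/-- `pq` is an edge of the cycle (given as a list) `C`. -/
def IsCycleEdge {V : Type u} (C : List V) (p q : V) : Prop :=
  ∃ i : Fin C.length, s(p, q) = s(C.get i, C.get (cycNext C i))

/-- `(G, S, L)` is a canvas, where the subgraph `S` of the boundary of the
outer face of `G` is given by its vertex set `Sverts` and adjacency `SAdj`. -/
structure IsCanvas {V : Type u} (G : PlaneGraph V) (Sverts : Set V) (SAdj : V → V → Prop)
    (L : V → Finset ℕ) : Prop where
  sadj_symm : ∀ u v, SAdj u v → SAdj v u
  sadj_sub : ∀ u v, SAdj u v → G.Adj u v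
  sadj_mem : ∀ u v, SAdj u v → u ∈ Sverts
  sverts_sub : Sverts ⊆ G.verts
  sverts_outer : ∀ v ∈ Sverts, G.OnOuter v
  sedges_outer : ∀ u v, SAdj u v → G.EdgeOnOuter u v
  lists_nonempty : ∀ v ∈ G.verts, (L v).Nonempty
  card_inner : ∀ v ∈ G.verts, ¬G.OnOuter v → 5 ≤ (L v).card
  card_outside_S : ∀ v ∈ G.verts, v ∉ Sverts → 3 ≤ (L v).card
  scolorable : ∃ φ : V → ℕ, (∀ v ∈ Sverts, φ v ∈ L v) ∧ ∀ u v, SAdj u v → φ u ≠ φ v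

/-- The adjacency relation of the single-edge path `p₁p₂`. -/
def pathAdj {V : Type u} (p1 p2 : V) : V → V → Prop :=
  fun u v => (u = p1 ∧ v = p2) ∨ (u = p2 ∧ v = p1)

/-- `(G, P, L)` is a canvas whose precolored subgraph is a path `P = p₁p₂` of
length one (in the boundary of the outer face of `G`). -/
def IsPathCanvas {V : Type u} (G : PlaneGraph V) (p1 p2 : V) (L : V → Finset ℕ) : Prop :=
  p1 ≠ p2 ∧ IsCanvas G {p1, p2} (pathAdj p1 p2) L

/-- `c = (c₁, c₂)` is a proper `L`-coloring of the edge `p₁p₂`. -/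
def ProperEdgeColoring {V : Type u} (L : V → Finset ℕ) (p1 p2 : V) (c : ℕ × ℕ) : Prop :=
  c.1 ∈ L p1 ∧ c.2 ∈ L p2 ∧ c.1 ≠ c.2

/-- `Φ_T(P', 𝒞)`: the colorings of the edge `q₁q₂` extendable to an `L`-coloring
of `G` whose restriction to `p₁p₂` lies in `C`. -/
def Phi {V : Type u} (G : PlaneGraph V) (L : V → Finset ℕ) (p1 p2 q1 q2 : V)
    (C : Set (ℕ × ℕ)) : Set (ℕ × ℕ) :=
  {c | ∃ φ : V → ℕ, (∀ v ∈ G.verts, φ v ∈ L v) ∧ (∀ u v, G.Adj u v → φ u ≠ φ v) ∧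
    (φ p1, φ p2) ∈ C ∧ φ q1 = c.1 ∧ φ q2 = c.2}

/-- The set of colors used on the first vertex of the path. -/
def fstColors (C : Set (ℕ × ℕ)) : Set ℕ := Prod.fst '' C

/-- The set of colors used on the second vertex of the path. -/
def sndColors (C : Set (ℕ × ℕ)) : Set ℕ := Prod.snd '' C

/-- A dictatorship: at least two (distinct) colorings, all agreeing on one of
the two vertices (the dictator). -/
def IsDictatorship (C : Set (ℕ × ℕ)) : Prop :=
  (∃ c ∈ C, ∃ d ∈ C, c ≠ d) ∧
  ((∃ a, ∀ c ∈ C, c.1 = a) ∨ (∃ a, ∀ c ∈ C, c.2 = a))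

/-- A democracy: exactly the two colorings `(x, y)` and `(y, x)`. -/
def IsDemocracy (C : Set (ℕ × ℕ)) : Prop :=
  ∃ x y : ℕ, x ≠ y ∧ C = {(x, y), (y, x)}

/-- A government is a dictatorship or a democracy. -/
def IsGovernment (C : Set (ℕ × ℕ)) : Prop := IsDictatorship C ∨ IsDemocracy C

/-- A confederacy: not a government, but the union of two governments. -/
def IsConfederacy (C : Set (ℕ × ℕ)) : Prop :=
  ¬IsGovernment C ∧ ∃ C1 C2 : Set (ℕ × ℕ), IsGovernment C1 ∧ IsGovernment C2 ∧ C = C1 ∪ C2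

/-- The canvas `(G, p₁p₂, L)` is a harmonica from the path `p₁p₂` to the path
`q₁q₂` with government `C`. -/
inductive IsHarmonica {V : Type u} (L : V → Finset ℕ) :
    PlaneGraph V → V → V → V → V → Set (ℕ × ℕ) → Prop where
  /-- Rule (i): `G = P = P'`. -/
  | same (G : PlaneGraph V) (p1 p2 q1 q2 : V) (C : Set (ℕ × ℕ))
      (hcanvas : IsPathCanvas G p1 p2 L)
      (hproper : ∀ c ∈ C, ProperEdgeColoring L p1 p2 c)
      (hgov : IsGovernment C)
      (hq : (q1 = p1 ∧ q2 = p2) ∨ (q1 = p2 ∧ q2 = p1))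
      (hverts : G.verts = {p1, p2})
      (hedges : ∀ u v, G.Adj u v → pathAdj p1 p2 u v) :
      IsHarmonica L G p1 p2 q1 q2 C
  /-- Rule (ii): `C` is a dictatorship, `G = P ∪ P'`, `V(P) ∩ V(P') = {z}`
  where `z` is the dictator. -/
  | cherry (G : PlaneGraph V) (p1 p2 q1 q2 z : V) (C : Set (ℕ × ℕ))
      (hcanvas : IsPathCanvas G p1 p2 L)
      (hproper : ∀ c ∈ C, ProperEdgeColoring L p1 p2 c)
      (hdict : IsDictatorship C)
      (hq : q1 ≠ q2) (hqadj : G.Adj q1 q2) (hqout : G.EdgeOnOuter q1 q2)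
      (hverts : G.verts = {p1, p2, q1, q2})
      (hedges : ∀ u v, G.Adj u v → pathAdj p1 p2 u v ∨ pathAdj q1 q2 u v)
      (hz : (({p1, p2} : Set V) ∩ ({q1, q2} : Set V)) = {z})
      (hzdict : (z = p1 ∧ ∃ a, ∀ c ∈ C, c.1 = a) ∨ (z = p2 ∧ ∃ a, ∀ c ∈ C, c.2 = a)) :
      IsHarmonica L G p1 p2 q1 q2 C
  /-- Rule (iii): `C` is a dictatorship with dictator `z ∈ V(P)` in color `c`,
  sitting on a triangle `z u₁ u₂`. -/
  | dict (G : PlaneGraph V) (p1 p2 q1 q2 z w u1 u2 : V) (c : ℕ) (L0 : Finset ℕ)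
      (C C' : Set (ℕ × ℕ))
      (hcanvas : IsPathCanvas G p1 p2 L)
      (hproper : ∀ d ∈ C, ProperEdgeColoring L p1 p2 d)
      (hdict : IsDictatorship C)
      (hq : q1 ≠ q2) (hqadj : G.Adj q1 q2) (hqout : G.EdgeOnOuter q1 q2)
      (hz : (z = p1 ∧ w = p2 ∧ (∀ d ∈ C, d.1 = c) ∧
              (u1 = w → sndColors C = (L0 : Set ℕ)) ∧
              (u2 = w → sndColors C = (L0 : Set ℕ))) ∨
            (z = p2 ∧ w = p1 ∧ (∀ d ∈ C, d.2 = c) ∧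
              (u1 = w → fstColors C = (L0 : Set ℕ)) ∧
              (u2 = w → fstColors C = (L0 : Set ℕ))))
      (hzu1 : G.Adj z u1) (hzu2 : G.Adj z u2) (hu12 : G.Adj u1 u2)
      (hL0 : L0.card = 2)
      (hLu1 : u1 ∉ ({p1, p2} : Set V) → L u1 = L0 ∪ {c})
      (hLu2 : u2 ∉ ({p1, p2} : Set V) → L u2 = L0 ∪ {c})
      (hu1P : u1 ∈ ({p1, p2} : Set V) → u1 = w)
      (hu2P : u2 ∈ ({p1, p2} : Set V) → u2 = w)
      (hdem : IsDemocracy C')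
      (hC'1 : fstColors C' = (L0 : Set ℕ)) (hC'2 : sndColors C' = (L0 : Set ℕ))
      (hrec : IsHarmonica L (G.deleteVerts (({p1, p2} : Set V) \ {u1, u2})) u1 u2 q1 q2 C') :
      IsHarmonica L G p1 p2 q1 q2 C
  /-- Rule (iv), with `i = 1`: `C` is a democracy, `z` is a common neighbor of
  `p₁, p₂`, and `p₁` is deleted. -/
  | demo1 (G : PlaneGraph V) (p1 p2 q1 q2 z : V) (a b c : ℕ) (L0 : Finset ℕ)
      (C C' : Set (ℕ × ℕ))
      (hcanvas : IsPathCanvas G p1 p2 L)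
      (hproper : ∀ d ∈ C, ProperEdgeColoring L p1 p2 d)
      (hdemC : IsDemocracy C)
      (hq : q1 ≠ q2) (hqadj : G.Adj q1 q2) (hqout : G.EdgeOnOuter q1 q2)
      (hz1 : G.Adj z p1) (hz2 : G.Adj z p2)
      (hLz : L z = L0 ∪ {c})
      (hC1 : fstColors C = (L0 : Set ℕ)) (hC2 : sndColors C = (L0 : Set ℕ))
      (hab : a ≠ b) (hL0ab : (L0 : Set ℕ) = {a, b})
      (hC' : C' = {(c, a), (c, b)})
      (hrec : IsHarmonica L (G.deleteVerts {p1}) z p2 q1 q2 C') :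
      IsHarmonica L G p1 p2 q1 q2 C
  /-- Rule (iv), with `i = 2`: `C` is a democracy, `z` is a common neighbor of
  `p₁, p₂`, and `p₂` is deleted. -/
  | demo2 (G : PlaneGraph V) (p1 p2 q1 q2 z : V) (a b c : ℕ) (L0 : Finset ℕ)
      (C C' : Set (ℕ × ℕ))
      (hcanvas : IsPathCanvas G p1 p2 L)
      (hproper : ∀ d ∈ C, ProperEdgeColoring L p1 p2 d)
      (hdemC : IsDemocracy C)
      (hq : q1 ≠ q2) (hqadj : G.Adj q1 q2) (hqout : G.EdgeOnOuter q1 q2)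
      (hz1 : G.Adj z p1) (hz2 : G.Adj z p2)
      (hLz : L z = L0 ∪ {c})
      (hC1 : fstColors C = (L0 : Set ℕ)) (hC2 : sndColors C = (L0 : Set ℕ))
      (hab : a ≠ b) (hL0ab : (L0 : Set ℕ) = {a, b})
      (hC' : C' = {(c, a), (c, b)})
      (hrec : IsHarmonica L (G.deleteVerts {p2}) z p1 q1 q2 C') :
      IsHarmonica L G p1 p2 q1 q2 C

/-- `(G, L)` is a coloring harmonica from `uv` to `w` (source `Sum.inr (u, v)`)
or from `u` to `w` (source `Sum.inl u`). -/
inductive IsColoringHarmonica {V : Type u} [DecidableEq V] :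
    PlaneGraph V → (V → Finset ℕ) → V ⊕ V × V → V → Prop where
  /-- `G` is a triangle with vertex set `{u, v, w}`, `L(u) = L(v) = L(w)` and
  `|L(u)| = 2`. -/
  | tri (G : PlaneGraph V) (L : V → Finset ℕ) (u v w : V)
      (hconn : G.Connected) (huv : u ≠ v) (huw : u ≠ w) (hvw : v ≠ w)
      (hu : G.OnOuter u) (hv : G.OnOuter v) (hw : G.OnOuter w)
      (huvout : G.EdgeOnOuter u v)
      (hverts : G.verts = {u, v, w})
      (hadjuv : G.Adj u v) (hadjvw : G.Adj v w) (hadjuw : G.Adj u w)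
      (hLuv : L u = L v) (hLvw : L v = L w) (hcard : (L u).card = 2) :
      IsColoringHarmonica G L (Sum.inr (u, v)) w
  /-- There is a triangle `uvz` on the outer face; delete one or both of
  `u, v` and recurse from `z`. -/
  | step (G : PlaneGraph V) (L : V → Finset ℕ) (u v w z : V) (s : Set V)
      (hconn : G.Connected) (huv : u ≠ v) (huw : u ≠ w) (hvw : v ≠ w)
      (hu : G.OnOuter u) (hv : G.OnOuter v) (hw : G.OnOuter w)
      (huvout : G.EdgeOnOuter u v)
      (hadjuv : G.Adj u v) (hadjuz : G.Adj u z) (hadjvz : G.Adj v z)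
      (hz : G.OnOuter z)
      (hLuv : L u = L v) (hsub : L u ⊆ L z)
      (hcardu : (L u).card = 2) (hcardz : (L z).card = 3)
      (hs : s = {u} ∨ s = {v} ∨ s = ({u, v} : Set V))
      (hrec : IsColoringHarmonica (G.deleteVerts s)
        (Function.update L z (L z \ L u)) (Sum.inl z) w) :
      IsColoringHarmonica G L (Sum.inr (u, v)) w
  /-- `|L(u)| = 1`, `u` sits on a triangle `uxy`; delete `u` and recurse
  from `xy`. -/
  | vert (G : PlaneGraph V) (L : V → Finset ℕ) (u w x y : V)
      (hconn : G.Connected) (huw : u ≠ w)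
      (hu : G.OnOuter u) (hw : G.OnOuter w)
      (hx : G.OnOuter x) (hy : G.OnOuter y)
      (hadjux : G.Adj u x) (hadjuy : G.Adj u y) (hadjxy : G.Adj x y)
      (hcardu : (L u).card = 1)
      (hLxy : L x \ L u = L y \ L u) (hcardx : (L x \ L u).card = 2)
      (hrec : IsColoringHarmonica (G.deleteVerts {u})
        (Function.update (Function.update L x (L x \ L u)) y (L y \ L u))
        (Sum.inr (x, y)) w) :
      IsColoringHarmonica G L (Sum.inl u) w

/-- `(G, L)` contains a coloring harmonica `(H, L')` with the given source and
target: `H` is a subgraph of `G` and `L'` agrees with `L` on `V(H)`. -/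
def ContainsColoringHarmonica {V : Type u} [DecidableEq V] (G : PlaneGraph V)
    (L : V → Finset ℕ) (st : V ⊕ V × V) (w : V) : Prop :=
  ∃ (H : PlaneGraph V) (L' : V → Finset ℕ), H.IsSubgraph G ∧
    (∀ x ∈ H.verts, L' x = L x) ∧ IsColoringHarmonica H L' st w

/-- `v` is a cutvertex of the boundary of the outer face of `G`. -/
def BoundaryCutvertex {V : Type u} (G : PlaneGraph V) (v : V) : Prop :=
  ∃ a b : V, a ∈ G.boundaryVerts ∧ b ∈ G.boundaryVerts ∧ a ≠ v ∧ b ≠ v ∧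
    Relation.ReflTransGen (fun x y => G.Adj x y ∧ G.EdgeOnOuter x y) a b ∧
    ¬Relation.ReflTransGen
      (fun x y => G.Adj x y ∧ G.EdgeOnOuter x y ∧ x ≠ v ∧ y ≠ v) a b

open Classical in
/-- The list assignment of the democratic reduction `T(P, L0, x)`:
remove the colors of `L0` from the list of `x` and from the lists of all
neighbors of `P` other than `y`. -/
noncomputable def reducedL {V : Type u} (G : PlaneGraph V) (L : V → Finset ℕ)
    (L0 : Finset ℕ) (Q : List V) (x y : V) : V → Finset ℕ := fun w =>
  if w = x ∨ (w ≠ y ∧ ∃ p ∈ Q, G.Adj w p) then L w \ L0 else L w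

/-- The vertex set of the precolored subgraph of the democratic reduction:
`S ∖ V(P)`, together with `x` as an isolated vertex if its new list is
smaller than 3. -/
def reducedSverts {V : Type u} (Sverts : Set V) (Q : List V) (x : V)
    (L' : V → Finset ℕ) : Set V :=
  {v | (v ∈ Sverts ∧ v ∉ Q) ∨ (v = x ∧ (L' x).card < 3)}

/-- The adjacency of the precolored subgraph of the democratic reduction:
`S ∖ V(P)`. -/
def reducedSAdj {V : Type u} (SAdj : V → V → Prop) (Q : List V) : V → V → Prop :=
  fun u v => SAdj u v ∧ u ∉ Q ∧ v ∉ Q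


theorem lift2 {A : Type} [TopologicalSpace A] [SimplyConnectedSpace A] [LocallyPathConnectedSpace A] [Nonempty A]
   (F : A → ℂ) (hF : Continuous F) (h0 : ∀ a, F a ≠ 0) :
   ∃ h : A → ℂ, Continuous h ∧ ∀ a, Complex.exp (h a) = F a := by
  obtain ⟨a⟩ := ‹Nonempty A›
  obtain ⟨h, ⟨h1, h2⟩, -⟩ := Complex.isCoveringMapOn_exp.existsUnique_continuousMap_lifts
    (⟨F, hF⟩ : C(A, ℂ)) (a₀ := a) (e₀ := Complex.log (F a)) (by simp [Complex.exp_log (h0 a)])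
    (by simpa using h0)
  exact ⟨h, h.continuous, fun b => congrFun h2 b⟩

theorem lift2' (F : ℝ × ℝ → ℂ) (hF : Continuous F) (h0 : ∀ a, F a ≠ 0) :
   ∃ h : ℝ × ℝ → ℂ, Continuous h ∧ ∀ a, Complex.exp (h a) = F a := lift2 F hF h0

theorem lift1 (F : ℝ → ℂ) (hF : Continuous F) (h0 : ∀ a, F a ≠ 0) :
   ∃ h : ℝ → ℂ, Continuous h ∧ ∀ a, Complex.exp (h a) = F a := lift2 F hF h0

/-- two logs of the same function up to a constant have equal increments -/
theorem lift_diff (h k : ℝ → ℂ) (hh : Continuous h) (hk : Continuous k) (c : ℂ)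
    (e : ∀ t, Complex.exp (h t) = c * Complex.exp (k t)) : h 1 - h 0 = k 1 - k 0 := by
  have hc : ∀ t, Complex.exp (h t - k t) = c := fun t => by
    rw [Complex.exp_sub, e t, mul_div_assoc, div_self (Complex.exp_ne_zero _), mul_one]
  have hn : ∀ t, ∃ n : ℤ, h t - k t = (h 0 - k 0) + n * (2 * Real.pi * Complex.I) := fun t => by
    exact Complex.exp_eq_exp_iff_exists_int.1 ((hc t).trans (hc 0).symm)
  choose n hn using hn
  have hcont : Continuous (fun t => ((n t : ℤ) : ℝ)) := by
    have : (fun t => ((n t : ℤ) : ℝ)) = fun t => ((h t - k t) - (h 0 - k 0)).im / (2 * Real.pi) := by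
      funext t
      rw [hn t]
      have := Real.pi_pos.ne'
      simp
    rw [this]
    fun_prop
  have hcn : Continuous n := by
    rw [Int.isClosedEmbedding_coe_real.isEmbedding.continuous_iff]; exact hcont
  have := (IsLocallyConstant.iff_continuous n).2 hcn
  have h01 : n 1 = n 0 := this.apply_eq_of_preconnectedSpace 1 0
  have h1 := hn 1
  have h2 := hn 0
  rw [h01] at h1
  linear_combination h1 - h2

theorem theta_exists (γ : ℝ → ℂ) (hγ : Continuous γ) (z : ℂ) :
    ∃ θ : ℂ, (∀ t, γ t ≠ z) → ∃ h : ℝ → ℂ, Continuous h ∧ (∀ t, Complex.exp (h t) = γ t - z) ∧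
      θ = h 1 - h 0 := by
  by_cases hz : ∀ t, γ t ≠ z
  · obtain ⟨h, h1, h2⟩ := lift1 (fun t => γ t - z) (by fun_prop) (fun t => sub_ne_zero.2 (hz t))
    exact ⟨h 1 - h 0, fun _ => ⟨h, h1, h2, rfl⟩⟩
  · exact ⟨0, fun h => absurd h hz⟩

theorem crossing_integers (N : ℕ) (x : Fin N → ℂ) (S : Fin N → Fin N → Set ℂ)
    (E : Fin N → Fin N → Prop)
    (hj : ∀ a b, a < b → E a b → JoinedIn (S a b) (x a) (x b))
    (hd : ∀ a b c d, a < b → c < d → E a b → E c d → a ≠ c → a ≠ d → b ≠ c → b ≠ d →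
      Disjoint (S a b) (S c d)) :
    ∃ n : Fin N → Fin N → Fin N → ℤ, ∀ a b c d, a < b → c < d → E a b → E c d →
      a ≠ c → a ≠ d → b ≠ c → b ≠ d →
      (if a < d then -1 else 1) + (if c < a then -1 else 1) + (if d < b then -1 else 1)
        + (if b < c then -1 else 1) = 2 * (n b c d + n c a b - n a c d - n d a b) := by
  classical
  have h1 : ∀ a b, ∃ γ : ℝ → ℂ, Continuous γ ∧
      (a < b → E a b → γ 0 = x a ∧ γ 1 = x b ∧ ∀ t, γ t ∈ S a b) := by
    intro a b
    by_cases h : a < b ∧ E a b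
    · obtain ⟨p, hp⟩ := hj a b h.1 h.2
      refine ⟨p.extend, p.continuous_extend, fun _ _ => ⟨by simp, by simp, fun t => ?_⟩⟩
      exact hp _
    · exact ⟨fun _ => 0, continuous_const, fun h1 h2 => absurd ⟨h1, h2⟩ h⟩
  choose γ hγ hγ' using h1
  have h2 : ∀ u v, ∃ l : ℂ, x u ≠ x v → Complex.exp l = x v - x u := by
    intro u v
    exact ⟨Complex.log (x v - x u), fun h => Complex.exp_log (sub_ne_zero.2 h.symm)⟩
  choose l0 hl0 using h2
  let l : Fin N → Fin N → ℂ := fun u v => if u < v then l0 u v else l0 v u + Real.pi * Complex.I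
  have hl : ∀ u v, x u ≠ x v → Complex.exp (l u v) = x v - x u := by
    intro u v h
    by_cases huv : u < v
    · simp only [l, huv, if_true]; exact hl0 _ _ h
    · simp only [l, huv, if_false]
      rw [Complex.exp_add, hl0 _ _ h.symm, Complex.exp_pi_mul_I]; ring
  have hll : ∀ u v, u ≠ v → l u v - l v u =
      (((if u < v then -1 else 1 : ℤ)) : ℂ) * (Real.pi * Complex.I) := by
    intro u v h
    rcases lt_or_gt_of_ne h with h | h
    · simp only [l, h, if_true, not_lt.2 h.le, if_false]; push_cast; ring
    · simp only [l, h, if_true, not_lt.2 h.le, if_false]; push_cast; ring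
  choose θ hθ using fun (u a b : Fin N) => theta_exists (γ a b) (hγ a b) (x u)
  have h3 : ∀ u a b, ∃ n : ℤ, a < b → E a b → (∀ t, γ a b t ≠ x u) →
      θ u a b = l u b - l u a + n * (2 * Real.pi * Complex.I) := by
    intro u a b
    by_cases h : a < b ∧ E a b ∧ ∀ t, γ a b t ≠ x u
    · obtain ⟨hab, hE, hz⟩ := h
      obtain ⟨e0, e1, -⟩ := hγ' a b hab hE
      obtain ⟨h, hc, he, ht⟩ := hθ u a b hz
      have hua : x u ≠ x a := fun e => hz 0 (by rw [e0, e])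
      have hub : x u ≠ x b := fun e => hz 1 (by rw [e1, e])
      have : Complex.exp (θ u a b) = Complex.exp (l u b - l u a) := by
        rw [ht, Complex.exp_sub, Complex.exp_sub, he, he, hl _ _ hua, hl _ _ hub, e0, e1]
      obtain ⟨n, hn⟩ := Complex.exp_eq_exp_iff_exists_int.1 this
      exact ⟨n, fun _ _ _ => hn⟩
    · exact ⟨0, fun h1 h2 h3 => absurd ⟨h1, h2, h3⟩ h⟩
  choose n hn using h3
  refine ⟨n, ?_⟩
  intro a b c d hab hcd hE hE' hac had hbc hbd
  have hdis := hd a b c d hab hcd hE hE' hac had hbc hbd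
  obtain ⟨ea, eb, hS⟩ := hγ' a b hab hE
  obtain ⟨ec, ed, hS'⟩ := hγ' c d hcd hE'
  have hne : ∀ s t, γ a b s ≠ γ c d t := fun s t e =>
    Set.disjoint_left.1 hdis (hS s) (e ▸ hS' t)
  obtain ⟨h, hc, he⟩ := lift2' (fun p => γ c d p.2 - γ a b p.1)
    (by have := hγ a b; have := hγ c d; fun_prop) (fun p => sub_ne_zero.2 (hne _ _).symm)
  have za : ∀ t, γ c d t ≠ x a := fun t => ea ▸ (hne 0 t).symm
  have zb : ∀ t, γ c d t ≠ x b := fun t => eb ▸ (hne 1 t).symm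
  have zc : ∀ t, γ a b t ≠ x c := fun t => ec ▸ (hne t 0)
  have zd : ∀ t, γ a b t ≠ x d := fun t => ed ▸ (hne t 1)
  have ta : θ a c d = h (0, 1) - h (0, 0) := by
    obtain ⟨k, kc, ke, kt⟩ := hθ a c d za
    rw [kt]
    exact (lift_diff (fun t => h (0, t)) k (by fun_prop) kc 1 (fun t => by
      simp only [he, ke, ea, one_mul])).symm
  have tb : θ b c d = h (1, 1) - h (1, 0) := by
    obtain ⟨k, kc, ke, kt⟩ := hθ b c d zb
    rw [kt]
    exact (lift_diff (fun t => h (1, t)) k (by fun_prop) kc 1 (fun t => by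
      simp only [he, ke, eb, one_mul])).symm
  have tc : θ c a b = h (1, 0) - h (0, 0) := by
    obtain ⟨k, kc, ke, kt⟩ := hθ c a b zc
    rw [kt]
    exact (lift_diff (fun t => h (t, 0)) k (by fun_prop) kc (-1) (fun t => by
      simp only [he, ke, ec]; ring)).symm
  have td : θ d a b = h (1, 1) - h (0, 1) := by
    obtain ⟨k, kc, ke, kt⟩ := hθ d a b zd
    rw [kt]
    exact (lift_diff (fun t => h (t, 1)) k (by fun_prop) kc (-1) (fun t => by
      simp only [he, ke, ed]; ring)).symm
  have na := hn a c d hcd hE' za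
  have nb := hn b c d hcd hE' zb
  have nc := hn c a b hab hE zc
  have nd := hn d a b hab hE zd
  have q1 := hll a d had
  have q2 := hll c a hac.symm
  have q3 := hll d b hbd.symm
  have q4 := hll b c hbc
  have key : ((((if a < d then -1 else 1) + (if c < a then -1 else 1) + (if d < b then -1 else 1)
        + (if b < c then -1 else 1) : ℤ)) : ℂ) * (Real.pi * Complex.I) =
        ((2 * (n b c d + n c a b - n a c d - n d a b) : ℤ) : ℂ) * (Real.pi * Complex.I) := by
    push_cast at q1 q2 q3 q4 ⊢
    linear_combination (-1) * q1 - q2 - q3 - q4 - na - nd + nb + nc + ta + td - tb - tc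
  have hpi : (Real.pi * Complex.I : ℂ) ≠ 0 := by
    simp [Real.pi_ne_zero]
  exact_mod_cast mul_right_cancel₀ hpi key

theorem no_K5_drawing (x : Fin 5 → ℂ) (S : Fin 5 → Fin 5 → Set ℂ)
    (hj : ∀ a b, a < b → JoinedIn (S a b) (x a) (x b))
    (hd : ∀ a b c d, a < b → c < d → a ≠ c → a ≠ d → b ≠ c → b ≠ d →
      Disjoint (S a b) (S c d)) : False := by
  obtain ⟨n, hn⟩ := crossing_integers 5 x S (fun _ _ => True) (fun a b h _ => hj a b h)
    (fun a b c d h1 h2 _ _ => hd a b c d h1 h2)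
  have h := fun a b c d h1 h2 h3 h4 h5 h6 => hn a b c d h1 h2 trivial trivial h3 h4 h5 h6
  have e1 := h 0 1 2 3 (by decide) (by decide) (by decide) (by decide) (by decide) (by decide)
  have e2 := h 0 2 1 3 (by decide) (by decide) (by decide) (by decide) (by decide) (by decide)
  have e3 := h 0 3 1 2 (by decide) (by decide) (by decide) (by decide) (by decide) (by decide)
  have e4 := h 0 1 2 4 (by decide) (by decide) (by decide) (by decide) (by decide) (by decide)
  have e5 := h 0 2 1 4 (by decide) (by decide) (by decide) (by decide) (by decide) (by decide)
  have e6 := h 0 4 1 2 (by decide) (by decide) (by decide) (by decide) (by decide) (by decide)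
  have e7 := h 0 1 3 4 (by decide) (by decide) (by decide) (by decide) (by decide) (by decide)
  have e8 := h 0 3 1 4 (by decide) (by decide) (by decide) (by decide) (by decide) (by decide)
  have e9 := h 0 4 1 3 (by decide) (by decide) (by decide) (by decide) (by decide) (by decide)
  have e10 := h 0 2 3 4 (by decide) (by decide) (by decide) (by decide) (by decide) (by decide)
  have e11 := h 0 3 2 4 (by decide) (by decide) (by decide) (by decide) (by decide) (by decide)
  have e12 := h 0 4 2 3 (by decide) (by decide) (by decide) (by decide) (by decide) (by decide)
  have e13 := h 1 2 3 4 (by decide) (by decide) (by decide) (by decide) (by decide) (by decide)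
  have e14 := h 1 3 2 4 (by decide) (by decide) (by decide) (by decide) (by decide) (by decide)
  have e15 := h 1 4 2 3 (by decide) (by decide) (by decide) (by decide) (by decide) (by decide)
  simp +decide only [if_true, if_false] at e1 e2 e3 e4 e5 e6 e7 e8 e9 e10 e11 e12 e13 e14 e15
  omega

theorem no_K33_drawing (x : Fin 6 → ℂ) (S : Fin 6 → Fin 6 → Set ℂ)
    (hj : ∀ a b : Fin 6, a < b → a.val % 2 ≠ b.val % 2 → JoinedIn (S a b) (x a) (x b))
    (hd : ∀ a b c d : Fin 6, a < b → c < d → a.val % 2 ≠ b.val % 2 → c.val % 2 ≠ d.val % 2 →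
      a ≠ c → a ≠ d → b ≠ c → b ≠ d → Disjoint (S a b) (S c d)) : False := by
  obtain ⟨n, h⟩ := crossing_integers 6 x S (fun a b => a.val % 2 ≠ b.val % 2) hj hd
  have e0 := h 0 1 2 3 (by decide) (by decide) (by decide) (by decide)
    (by decide) (by decide) (by decide) (by decide)
  have e1 := h 0 1 2 5 (by decide) (by decide) (by decide) (by decide)
    (by decide) (by decide) (by decide) (by decide)
  have e2 := h 0 1 3 4 (by decide) (by decide) (by decide) (by decide)
    (by decide) (by decide) (by decide) (by decide)
  have e3 := h 0 1 4 5 (by decide) (by decide) (by decide) (by decide)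
    (by decide) (by decide) (by decide) (by decide)
  have e4 := h 0 3 1 2 (by decide) (by decide) (by decide) (by decide)
    (by decide) (by decide) (by decide) (by decide)
  have e5 := h 0 3 1 4 (by decide) (by decide) (by decide) (by decide)
    (by decide) (by decide) (by decide) (by decide)
  have e6 := h 0 3 2 5 (by decide) (by decide) (by decide) (by decide)
    (by decide) (by decide) (by decide) (by decide)
  have e7 := h 0 3 4 5 (by decide) (by decide) (by decide) (by decide)
    (by decide) (by decide) (by decide) (by decide)
  have e8 := h 0 5 1 2 (by decide) (by decide) (by decide) (by decide)
    (by decide) (by decide) (by decide) (by decide)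
  have e9 := h 0 5 1 4 (by decide) (by decide) (by decide) (by decide)
    (by decide) (by decide) (by decide) (by decide)
  have e10 := h 0 5 2 3 (by decide) (by decide) (by decide) (by decide)
    (by decide) (by decide) (by decide) (by decide)
  have e11 := h 0 5 3 4 (by decide) (by decide) (by decide) (by decide)
    (by decide) (by decide) (by decide) (by decide)
  have e12 := h 1 2 3 4 (by decide) (by decide) (by decide) (by decide)
    (by decide) (by decide) (by decide) (by decide)
  have e13 := h 1 2 4 5 (by decide) (by decide) (by decide) (by decide)
    (by decide) (by decide) (by decide) (by decide)
  have e14 := h 1 4 2 3 (by decide) (by decide) (by decide) (by decide)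
    (by decide) (by decide) (by decide) (by decide)
  have e15 := h 1 4 2 5 (by decide) (by decide) (by decide) (by decide)
    (by decide) (by decide) (by decide) (by decide)
  have e16 := h 2 3 4 5 (by decide) (by decide) (by decide) (by decide)
    (by decide) (by decide) (by decide) (by decide)
  have e17 := h 2 5 3 4 (by decide) (by decide) (by decide) (by decide)
    (by decide) (by decide) (by decide) (by decide)
  simp +decide only [if_true, if_false] at e0 e1 e2 e3 e4 e5 e6 e7 e8 e9 e10 e11 e12 e13 e14 e15 e16 e17
  omega

section Minors

open Relation

variable {W : Type*}

/-- Adjacency inside the set `B`. -/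
def RelIn (H : SimpleGraph W) (B : Set W) (u v : W) : Prop := H.Adj u v ∧ u ∈ B ∧ v ∈ B

/-- `B` induces a connected subgraph (or is empty). -/
def ConnIn (H : SimpleGraph W) (B : Set W) : Prop :=
  ∀ u ∈ B, ∀ v ∈ B, ReflTransGen (RelIn H B) u v

/-- There is an edge between `A` and `B`. -/
def Touch (H : SimpleGraph W) (A B : Set W) : Prop := ∃ u ∈ A, ∃ v ∈ B, H.Adj u v

/-- A drawing in the plane in which vertex-disjoint edges are disjoint. -/
def Drawable (H : SimpleGraph W) : Prop :=
  ∃ (x : W → ℂ) (S : W → W → Set ℂ), (∀ u v, H.Adj u v → JoinedIn (S u v) (x u) (x v)) ∧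
    ∀ u v a b, H.Adj u v → H.Adj a b → u ≠ a → u ≠ b → v ≠ a → v ≠ b → Disjoint (S u v) (S a b)

theorem RelIn.mono {H : SimpleGraph W} {B B' : Set W} (h : B ⊆ B') {u v : W}
    (r : RelIn H B u v) : RelIn H B' u v := ⟨r.1, h r.2.1, h r.2.2⟩

theorem RelIn.symm {H : SimpleGraph W} {B : Set W} {u v : W}
    (r : RelIn H B u v) : RelIn H B v u := ⟨r.1.symm, r.2.2, r.2.1⟩

theorem rtg_mono {H : SimpleGraph W} {B B' : Set W} (h : B ⊆ B') {u v : W}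
    (r : ReflTransGen (RelIn H B) u v) : ReflTransGen (RelIn H B') u v := by
  induction r with
  | refl => exact ReflTransGen.refl
  | tail _ r ih => exact ih.tail (RelIn.mono h r)

theorem rtg_symm {H : SimpleGraph W} {B : Set W} {u v : W}
    (r : ReflTransGen (RelIn H B) u v) : ReflTransGen (RelIn H B) v u := by
  induction r with
  | refl => exact ReflTransGen.refl
  | tail _ r ih => exact ReflTransGen.head (RelIn.symm r) ih

theorem joined_of_trans {H : SimpleGraph W} {x : W → ℂ} {S : W → W → Set ℂ}
    (hj : ∀ u v, H.Adj u v → JoinedIn (S u v) (x u) (x v)) {B : Set W} {u v : W}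
    (h : TransGen (RelIn H B) u v) :
    JoinedIn {z | ∃ a b, RelIn H B a b ∧ z ∈ S a b} (x u) (x v) := by
  have step : ∀ a b, RelIn H B a b →
      JoinedIn {z | ∃ a b, RelIn H B a b ∧ z ∈ S a b} (x a) (x b) := fun a b r =>
    (hj a b r.1).mono fun z hz => ⟨a, b, r, hz⟩
  induction h with
  | single r => exact step _ _ r
  | tail _ r ih => exact ih.trans (step _ _ r)

theorem model_trans {H : SimpleGraph W} {A B : Set W} (hA : ConnIn H A) (hB : ConnIn H B)
    (ht : Touch H A B) {u v : W} (hu : u ∈ A) (hv : v ∈ B) :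
    TransGen (RelIn H (A ∪ B)) u v := by
  obtain ⟨a, ha, b, hb, hab⟩ := ht
  have h1 : ReflTransGen (RelIn H (A ∪ B)) u a :=
    rtg_mono Set.subset_union_left (hA u hu a ha)
  have h2 : ReflTransGen (RelIn H (A ∪ B)) b v :=
    rtg_mono Set.subset_union_right (hB b hb v hv)
  exact TransGen.trans_right h1 (TransGen.head' ⟨hab, Or.inl ha, Or.inr hb⟩ h2)

theorem model_data {H : SimpleGraph W} (hD : Drawable H) {N : ℕ} (B : Fin N → Set W)
    (hne : ∀ i, (B i).Nonempty) (hc : ∀ i, ConnIn H (B i))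
    (hdis : ∀ i j, i ≠ j → Disjoint (B i) (B j)) :
    ∃ (x : Fin N → ℂ) (S : Fin N → Fin N → Set ℂ),
      (∀ a b, Touch H (B a) (B b) → JoinedIn (S a b) (x a) (x b)) ∧
      (∀ a b c d, a ≠ c → a ≠ d → b ≠ c → b ≠ d → Disjoint (S a b) (S c d)) := by
  obtain ⟨x, S, hj, hd⟩ := hD
  choose r hr using hne
  refine ⟨fun i => x (r i),
    fun i j => {z | ∃ a b, RelIn H (B i ∪ B j) a b ∧ z ∈ S a b}, ?_, ?_⟩
  · intro a b ht
    exact joined_of_trans hj (model_trans (hc a) (hc b) ht (hr a) (hr b))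
  · intro a b c d hac had hbc hbd
    rw [Set.disjoint_left]
    rintro z ⟨u, v, r1, h1⟩ ⟨u', v', r2, h2⟩
    have hne : ∀ p ∈ B a ∪ B b, ∀ q ∈ B c ∪ B d, p ≠ q := by
      rintro p hp q hq rfl
      rcases hp with hp | hp <;> rcases hq with hq | hq
      · exact Set.disjoint_left.1 (hdis _ _ hac) hp hq
      · exact Set.disjoint_left.1 (hdis _ _ had) hp hq
      · exact Set.disjoint_left.1 (hdis _ _ hbc) hp hq
      · exact Set.disjoint_left.1 (hdis _ _ hbd) hp hq
    exact Set.disjoint_left.1 (hd u v u' v' r1.1 r2.1 (hne _ r1.2.1 _ r2.2.1)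
      (hne _ r1.2.1 _ r2.2.2) (hne _ r1.2.2 _ r2.2.1) (hne _ r1.2.2 _ r2.2.2)) h1 h2

theorem no_K5_model {H : SimpleGraph W} (hD : Drawable H) (B : Fin 5 → Set W)
    (hne : ∀ i, (B i).Nonempty) (hc : ∀ i, ConnIn H (B i))
    (hdis : ∀ i j, i < j → Disjoint (B i) (B j))
    (ht : ∀ i j, i < j → Touch H (B i) (B j)) : False := by
  obtain ⟨x, S, h1, h2⟩ := model_data hD B hne hc (fun i j h => by
    rcases lt_or_gt_of_ne h with h | h
    · exact hdis _ _ h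
    · exact (hdis _ _ h).symm)
  exact no_K5_drawing x S (fun a b h => h1 a b (ht a b h)) (fun a b c d _ _ => h2 a b c d)

theorem no_K33_model {H : SimpleGraph W} (hD : Drawable H) (B : Fin 6 → Set W)
    (hne : ∀ i, (B i).Nonempty) (hc : ∀ i, ConnIn H (B i))
    (hdis : ∀ i j, i < j → Disjoint (B i) (B j))
    (ht : ∀ i j : Fin 6, i < j → i.val % 2 ≠ j.val % 2 → Touch H (B i) (B j)) : False := by
  obtain ⟨x, S, h1, h2⟩ := model_data hD B hne hc (fun i j h => by
    rcases lt_or_gt_of_ne h with h | h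
    · exact hdis _ _ h
    · exact (hdis _ _ h).symm)
  exact no_K33_drawing x S (fun a b h h' => h1 a b (ht a b h h'))
    (fun a b c d _ _ _ _ => h2 a b c d)

theorem connIn_singleton (H : SimpleGraph W) (v : W) : ConnIn H {v} := by
  rintro u rfl w rfl; exact ReflTransGen.refl

theorem connIn_insert {H : SimpleGraph W} {B : Set W} (hB : ConnIn H B) {v b : W} (hb : b ∈ B)
    (hv : H.Adj v b) : ConnIn H (insert v B) := by
  have key : ∀ w ∈ insert v B, ReflTransGen (RelIn H (insert v B)) b w := by
    rintro w (rfl | hw)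
    · exact ReflTransGen.single ⟨hv.symm, Or.inr hb, Or.inl rfl⟩
    · exact rtg_mono (Set.subset_insert _ _) (hB b hb w hw)
  intro u hu w hw
  exact (rtg_symm (key u hu)).trans (key w hw)

end Minors

section Thomassen

open Relation

variable {W : Type*}

/-- The component of `k` in the subgraph induced by `R`. -/
def compIn (H : SimpleGraph W) (R : Set W) (k : W) : Set W := {w | ReflTransGen (RelIn H R) k w}

theorem compIn_subset {H : SimpleGraph W} {R : Set W} {k : W} (hk : k ∈ R) :
    compIn H R k ⊆ R := by
  intro w hw
  have hw' : ReflTransGen (RelIn H R) k w := hw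
  rcases ReflTransGen.cases_tail hw' with h | ⟨c, _, h⟩
  · rw [h]; exact hk
  · exact h.2.2

theorem compIn_eq {H : SimpleGraph W} {R : Set W} {k w : W} (hw : w ∈ compIn H R k) :
    compIn H R k = compIn H R w := by
  have hw' : ReflTransGen (RelIn H R) k w := hw
  ext z
  constructor
  · intro hz; exact (rtg_symm hw').trans hz
  · intro hz; exact hw'.trans hz

theorem rtg_comp {H : SimpleGraph W} {R : Set W} {k w : W}
    (hw : ReflTransGen (RelIn H R) k w) :
    ReflTransGen (RelIn H (compIn H R k)) k w := by
  induction hw with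
  | refl => exact ReflTransGen.refl
  | tail h1 h2 ih => exact ih.tail ⟨h2.1, h1, h1.tail h2⟩

theorem compIn_conn {H : SimpleGraph W} {R : Set W} {k : W} : ConnIn H (compIn H R k) := by
  intro u hu v hv
  exact (rtg_symm (rtg_comp hu)).trans (rtg_comp hv)

theorem Touch.mono {H : SimpleGraph W} {A B A' B' : Set W} (h : Touch H A B) (hA : A ⊆ A')
    (hB : B ⊆ B') : Touch H A' B' := by
  obtain ⟨u, hu, v, hv, huv⟩ := h
  exact ⟨u, hA hu, v, hB hv, huv⟩

theorem Touch.symm {H : SimpleGraph W} {A B : Set W} (h : Touch H A B) : Touch H B A := by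
  obtain ⟨u, hu, v, hv, huv⟩ := h
  exact ⟨v, hv, u, hu, huv.symm⟩

theorem link_exists {H : SimpleGraph W} {R : Set W} {a b : W} (hab : a ≠ b) (ha : a ∉ R)
    (h : ReflTransGen (RelIn H (insert a (insert b R))) a b) :
    ∃ K : Set W, K ⊆ R ∧ (∀ k ∈ K, K = compIn H R k) ∧ ConnIn H (insert a K) ∧
      Touch H (insert a K) {b} ∧ (K.Nonempty → Touch H K {a} ∧ Touch H K {b} ∧ ConnIn H K) := by
  set P : Prop := H.Adj a b ∨ ∃ k ∈ R, Touch H (compIn H R k) {a} ∧ Touch H (compIn H R k) {b}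
    with hP
  have key : ∀ x, ReflTransGen (RelIn H (insert a (insert b R))) x b →
      P ∨ x = b ∨ (x ∈ R ∧ Touch H (compIn H R x) {b}) := by
    intro x hx
    induction hx using ReflTransGen.head_induction_on with
    | refl => exact Or.inr (Or.inl rfl)
    | head hr hh ih =>
      rename_i u w
      rcases ih with ih | ih
      · exact Or.inl ih
      · rcases hr.2.1 with rfl | rfl | hu
        · rcases ih with rfl | ⟨hw, ht⟩
          · exact Or.inl (Or.inl hr.1)
          · exact Or.inl (Or.inr ⟨w, hw, ⟨w, ReflTransGen.refl, u, rfl, hr.1.symm⟩, ht⟩)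
        · exact Or.inr (Or.inl rfl)
        · right; right
          refine ⟨hu, ?_⟩
          rcases ih with rfl | ⟨hw, ht⟩
          · exact ⟨u, ReflTransGen.refl, w, rfl, hr.1⟩
          · rw [compIn_eq (k := u) (w := w) (ReflTransGen.single ⟨hr.1, hu, hw⟩)]
            exact ht
  rcases key a h with (h | ⟨k, hk, h1, h2⟩) | h | h
  · refine ⟨∅, Set.empty_subset _, fun k hk => hk.elim, ?_, ?_, ?_⟩
    · rw [insert_empty_eq]; exact connIn_singleton H a
    · exact ⟨a, Set.mem_insert _ _, b, rfl, h⟩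
    · rintro ⟨k, hk⟩; exact hk.elim
  · refine ⟨compIn H R k, compIn_subset hk, fun w hw => compIn_eq hw, ?_, ?_, ?_⟩
    · obtain ⟨u, hu, v, rfl, huv⟩ := h1
      exact connIn_insert compIn_conn hu huv.symm
    · exact h2.mono (Set.subset_insert _ _) le_rfl
    · intro _; exact ⟨h1, h2, compIn_conn⟩
  · exact absurd h hab
  · exact absurd h.1 ha

/-- Being adjacent to the outer set. -/
def On (H : SimpleGraph W) (A : Set W) (v : W) : Prop := ∃ a ∈ A, H.Adj v a

theorem no_three {H : SimpleGraph W} (hD : Drawable H) {A X : Set W} (hA : ConnIn H A)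
    (hAX : ∀ v ∈ X, v ∉ A) {v a b c : W} (hv : v ∈ X) (ha : a ∈ X) (hb : b ∈ X) (hc : c ∈ X)
    (ov : On H A v) (oa : On H A a) (ob : On H A b) (oc : On H A c)
    (va : H.Adj v a) (vb : H.Adj v b) (vc : H.Adj v c)
    (hab : a ≠ b) (hac : a ≠ c) (hbc : b ≠ c)
    (rab : ReflTransGen (RelIn H (X \ {v, c})) a b)
    (rbc : ReflTransGen (RelIn H (X \ {v, a})) b c)
    (rca : ReflTransGen (RelIn H (X \ {v, b})) c a) : False := by
  have nva := va.ne
  have nvb := vb.ne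
  have nvc := vc.ne
  set R : Set W := X \ {v, a, b, c} with hR
  have hRX : ∀ w ∈ R, w ∉ A ∧ w ≠ v ∧ w ≠ a ∧ w ≠ b ∧ w ≠ c := by
    rintro w ⟨h1, h2⟩
    simp only [Set.mem_insert_iff, Set.mem_singleton_iff, not_or] at h2
    exact ⟨hAX w h1, h2⟩
  have haR : a ∉ R := fun h => (hRX a h).2.2.1 rfl
  have hbR : b ∉ R := fun h => (hRX b h).2.2.2.1 rfl
  have hcR : c ∉ R := fun h => (hRX c h).2.2.2.2 rfl
  have hvR : v ∉ R := fun h => (hRX v h).2.1 rfl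
  obtain ⟨K1, s1, e1, c1, t1, n1⟩ := link_exists hab haR (rtg_mono (by
    rintro w ⟨h1, h2⟩
    simp only [hR, Set.mem_insert_iff, Set.mem_singleton_iff, Set.mem_sdiff] at h2 ⊢; tauto) rab)
  obtain ⟨K2, s2, e2, c2, t2, n2⟩ := link_exists hbc hbR (rtg_mono (by
    rintro w ⟨h1, h2⟩
    simp only [hR, Set.mem_insert_iff, Set.mem_singleton_iff, Set.mem_sdiff] at h2 ⊢; tauto) rbc)
  obtain ⟨K3, s3, e3, c3, t3, n3⟩ := link_exists hac.symm hcR (rtg_mono (by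
    rintro w ⟨h1, h2⟩
    simp only [hR, Set.mem_insert_iff, Set.mem_singleton_iff, Set.mem_sdiff] at h2 ⊢; tauto) rca)
  have nvA := hAX v hv
  have naA := hAX a ha
  have nbA := hAX b hb
  have ncA := hAX c hc
  have hAne : A.Nonempty := by obtain ⟨x, hx, _⟩ := ov; exact ⟨x, hx⟩
  have tA : ∀ w, On H A w → Touch H {w} A := by
    rintro w ⟨x, hx, h⟩; exact ⟨w, rfl, x, hx, h⟩
  have tS : ∀ x y, H.Adj x y → Touch H {x} {y} := fun x y h => ⟨x, rfl, y, rfl, h⟩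
  -- no component touches all three
  have noK : ∀ K : Set W, K ⊆ R → K.Nonempty → ConnIn H K → Touch H K {a} → Touch H K {b} →
      Touch H K {c} → False := by
    intro K hK hKn hKc k1 k2 k3
    refine no_K33_model hD ![{v}, {a}, A, {b}, K, {c}] ?_ ?_ ?_ ?_
    · intro i; fin_cases i
      · exact Set.singleton_nonempty _
      · exact Set.singleton_nonempty _
      · exact hAne
      · exact Set.singleton_nonempty _
      · exact hKn
      · exact Set.singleton_nonempty _
    · intro i; fin_cases i
      · exact connIn_singleton H _
      · exact connIn_singleton H _
      · exact hA
      · exact connIn_singleton H _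
      · exact hKc
      · exact connIn_singleton H _
    · have q1 : v ∉ K := fun h => hvR (hK h)
      have q2 : a ∉ K := fun h => haR (hK h)
      have q3 : b ∉ K := fun h => hbR (hK h)
      have q4 : c ∉ K := fun h => hcR (hK h)
      have q5 : Disjoint A K := Set.disjoint_left.2 fun w h h' => (hRX w (hK h')).1 h
      intro i j hij
      fin_cases i <;> fin_cases j <;> first | (exact absurd hij (by decide)) | skip
      all_goals simp [*]
    · intro i j hij hm
      fin_cases i <;> fin_cases j <;> first | (exact absurd hij (by decide)) | skip
      all_goals first | (exact absurd rfl hm) | skip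
      · exact tS _ _ va
      · exact tS _ _ vb
      · exact tS _ _ vc
      · exact tA _ oa
      · exact k1.symm
      · exact (tA _ ob).symm
      · exact (tA _ oc).symm
      · exact k2.symm
      · exact k3
  have d12 : Disjoint K1 K2 := by
    rw [Set.disjoint_left]; intro w h h'
    obtain ⟨x1, x2, x3⟩ := n1 ⟨w, h⟩
    obtain ⟨y1, y2, y3⟩ := n2 ⟨w, h'⟩
    have e : K1 = K2 := (e1 w h).trans (e2 w h').symm
    exact noK K1 s1 ⟨w, h⟩ x3 x1 x2 (e ▸ y2)
  have d13 : Disjoint K1 K3 := by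
    rw [Set.disjoint_left]; intro w h h'
    obtain ⟨x1, x2, x3⟩ := n1 ⟨w, h⟩
    obtain ⟨y1, y2, y3⟩ := n3 ⟨w, h'⟩
    have e : K1 = K3 := (e1 w h).trans (e3 w h').symm
    exact noK K1 s1 ⟨w, h⟩ x3 x1 x2 (e ▸ y1)
  have d23 : Disjoint K2 K3 := by
    rw [Set.disjoint_left]; intro w h h'
    obtain ⟨x1, x2, x3⟩ := n2 ⟨w, h⟩
    obtain ⟨y1, y2, y3⟩ := n3 ⟨w, h'⟩
    have e : K2 = K3 := (e2 w h).trans (e3 w h').symm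
    exact noK K2 s2 ⟨w, h⟩ x3 (e ▸ y2) x1 x2
  refine no_K5_model hD ![{v}, A, insert a K1, insert b K2, insert c K3] ?_ ?_ ?_ ?_
  · intro i; fin_cases i
    · exact Set.singleton_nonempty _
    · exact hAne
    · exact Set.insert_nonempty _ _
    · exact Set.insert_nonempty _ _
    · exact Set.insert_nonempty _ _
  · intro i; fin_cases i
    · exact connIn_singleton H _
    · exact hA
    · exact c1
    · exact c2
    · exact c3
  · have q : ∀ K : Set W, K ⊆ R → v ∉ K ∧ a ∉ K ∧ b ∉ K ∧ c ∉ K ∧ Disjoint A K := by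
      intro K hK
      exact ⟨fun h => hvR (hK h), fun h => haR (hK h), fun h => hbR (hK h),
        fun h => hcR (hK h), Set.disjoint_left.2 fun w h h' => (hRX w (hK h')).1 h⟩
    obtain ⟨q11, q12, q13, q14, q15⟩ := q K1 s1
    obtain ⟨q21, q22, q23, q24, q25⟩ := q K2 s2
    obtain ⟨q31, q32, q33, q34, q35⟩ := q K3 s3
    have hba := hab.symm
    have hca := hac.symm
    have hcb := hbc.symm
    intro i j hij
    fin_cases i <;> fin_cases j <;> first | (exact absurd hij (by decide)) | skip
    all_goals simp [Set.disjoint_insert_left, Set.disjoint_insert_right, *]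
  · intro i j hij
    fin_cases i <;> fin_cases j <;> first | (exact absurd hij (by decide)) | skip
    · exact tA _ ov
    · exact (tS _ _ va).mono le_rfl (by simp)
    · exact (tS _ _ vb).mono le_rfl (by simp)
    · exact (tS _ _ vc).mono le_rfl (by simp)
    · exact (tA _ oa).symm.mono le_rfl (by simp)
    · exact (tA _ ob).symm.mono le_rfl (by simp)
    · exact (tA _ oc).symm.mono le_rfl (by simp)
    · exact t1.mono le_rfl (by simp)
    · exact t3.symm.mono (by simp) le_rfl
    · exact t2.mono le_rfl (by simp)

open Classical in
/-- Remove the colors `M` from the lists of the interior neighbors of `p`. -/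
noncomputable def cutL (H : SimpleGraph W) (A : Set W) (L : W → Finset ℕ) (p : W)
    (M : Finset ℕ) : W → Finset ℕ := fun v => if H.Adj v p ∧ ¬ On H A v then L v \ M else L v

/-- The standing hypotheses of the induction. -/
structure Cond (H : SimpleGraph W) (A : Set W) (X : Finset W) (L : W → Finset ℕ) : Prop where
  conn : ConnIn H A
  disj : ∀ v ∈ X, v ∉ A
  three : ∀ v ∈ X, 3 ≤ (L v).card
  five : ∀ v ∈ X, ¬ On H A v → 5 ≤ (L v).card

/-- `φ` is a proper coloring of `X`, using the lists outside of `Q`. -/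
def Col (H : SimpleGraph W) (X : Finset W) (L : W → Finset ℕ) (Q : Set W) (φ : W → ℕ) : Prop :=
  (∀ v ∈ X, v ∉ Q → φ v ∈ L v) ∧ ∀ u ∈ X, ∀ v ∈ X, H.Adj u v → φ u ≠ φ v

theorem On.insert {H : SimpleGraph W} {A : Set W} {v p : W} (h : On H A v) :
    On H (insert p A) v := by
  obtain ⟨a, ha, h⟩ := h; exact ⟨a, Or.inr ha, h⟩

theorem cond_cut [DecidableEq W] {H : SimpleGraph W} {A : Set W} {X : Finset W}
    {L : W → Finset ℕ}
    (hC : Cond H A X L) {p : W} (hA : ConnIn H (insert p A)) {M : Finset ℕ}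
    (hM : M.card ≤ 2) : Cond H (insert p A) (X.erase p) (cutL H A L p M) := by
  have hcard : ∀ v, (L v).card ≤ (L v \ M).card + 2 := by
    intro v
    have := Finset.le_card_sdiff M (L v)
    omega
  refine ⟨hA, ?_, ?_, ?_⟩
  · rintro v hv (h | h)
    · exact (Finset.mem_erase.1 hv).1 h
    · exact hC.disj v (Finset.mem_erase.1 hv).2 h
  · intro v hv
    have hvX := (Finset.mem_erase.1 hv).2
    unfold cutL
    split_ifs with h
    · have := hC.five v hvX h.2
      have := hcard v
      omega
    · exact hC.three v hvX
  · intro v hv ho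
    have hvX := (Finset.mem_erase.1 hv).2
    have h1 : ¬ On H A v := fun h => ho h.insert
    have h2 : ¬ H.Adj v p := fun h => ho ⟨p, Or.inl rfl, h⟩
    unfold cutL
    rw [if_neg (fun h => h2 h.1)]
    exact hC.five v hvX h1

theorem col_extend [DecidableEq W] {H : SimpleGraph W} {A : Set W} {X : Finset W}
    {L : W → Finset ℕ} {p : W} {M : Finset ℕ} {Q : Set W} {φ : W → ℕ} {m : ℕ} (hm : m ∈ M)
    (hQ : ∀ q ∈ Q, On H A q) (hφ : Col H (X.erase p) (cutL H A L p M) Q φ)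
    (hn : ∀ v ∈ X, H.Adj v p → On H A v → φ v ≠ m) (hmp : p ∈ Q ∨ m ∈ L p) :
    Col H X L Q (Function.update φ p m) := by
  have hne : ∀ v ∈ X, H.Adj v p → φ v ≠ m := by
    intro v hv hvp
    by_cases ho : On H A v
    · exact hn v hv hvp ho
    · have h1 := hφ.1 v (Finset.mem_erase.2 ⟨hvp.ne, hv⟩) (fun h => ho (hQ v h))
      unfold cutL at h1
      rw [if_pos ⟨hvp, ho⟩] at h1
      rintro rfl
      exact (Finset.mem_sdiff.1 h1).2 hm
  constructor
  · intro v hv hvQ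
    by_cases hvp : v = p
    · subst hvp
      rw [Function.update_self]
      exact hmp.resolve_left hvQ
    · rw [Function.update_of_ne hvp]
      have h1 := hφ.1 v (Finset.mem_erase.2 ⟨hvp, hv⟩) hvQ
      unfold cutL at h1
      split_ifs at h1 with h
      · exact (Finset.mem_sdiff.1 h1).1
      · exact h1
  · intro u hu v hv huv
    by_cases hup : u = p
    · subst hup
      rw [Function.update_self, Function.update_of_ne huv.ne.symm]
      exact (hne v hv huv.symm).symm
    · by_cases hvp : v = p
      · subst hvp
        rw [Function.update_self, Function.update_of_ne hup]
        exact hne u hu huv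
      · rw [Function.update_of_ne hup, Function.update_of_ne hvp]
        exact hφ.2 u (Finset.mem_erase.2 ⟨hup, hu⟩) v (Finset.mem_erase.2 ⟨hvp, hv⟩) huv

theorem Cond.mono {H : SimpleGraph W} {A : Set W} {X Y : Finset W}
    {L : W → Finset ℕ} (hC : Cond H A X L) (h : Y ⊆ X) : Cond H A Y L :=
  ⟨hC.conn, fun v hv => hC.disj v (h hv), fun v hv => hC.three v (h hv),
    fun v hv => hC.five v (h hv)⟩

/-- Extension with two adjacent precolored vertices. -/
def T2 (H : SimpleGraph W) (X : Finset W) : Prop :=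
  ∀ (A : Set W) (L : W → Finset ℕ), Cond H A X L → ∀ p1 ∈ X, ∀ p2 ∈ X, On H A p1 → On H A p2 →
    H.Adj p1 p2 → ∀ c1 c2 : ℕ, c1 ≠ c2 → ∃ φ, φ p1 = c1 ∧ φ p2 = c2 ∧ Col H X L {p1, p2} φ

/-- Extension with one precolored vertex. -/
def T1 (H : SimpleGraph W) (X : Finset W) : Prop :=
  ∀ (A : Set W) (L : W → Finset ℕ), Cond H A X L → ∀ p ∈ X, On H A p →
    ∀ c : ℕ, ∃ φ, φ p = c ∧ Col H X L {p} φ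

/-- Extension with no precolored vertex. -/
def T0 (H : SimpleGraph W) (X : Finset W) : Prop :=
  ∀ (A : Set W) (L : W → Finset ℕ), Cond H A X L → ∃ φ, Col H X L ∅ φ

theorem t1_of {H : SimpleGraph W} {X : Finset W} (h2 : T2 H X)
    (h0 : ∀ Y : Finset W, Y.card < X.card → T0 H Y) : T1 H X := by
  classical
  intro A L hC p hp op c
  by_cases hq : ∃ q ∈ X, H.Adj q p ∧ On H A q
  · obtain ⟨q, hq, hqp, oq⟩ := hq
    obtain ⟨c2, hc2, hne⟩ : ∃ c2 ∈ L q, c2 ≠ c :=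
      Finset.exists_mem_ne (by have := hC.three q hq; omega) c
    obtain ⟨φ, e1, e2, hφ⟩ := h2 A L hC p hp q hq op oq hqp.symm c c2 hne.symm
    refine ⟨φ, e1, ?_, hφ.2⟩
    intro v hv hvp
    by_cases hvq : v = q
    · subst hvq; rw [e2]; exact hc2
    · exact hφ.1 v hv (by
        rintro (h | h)
        · exact hvp h
        · exact hvq h)
  · push Not at hq
    obtain ⟨a, ha, hpa⟩ := op
    obtain ⟨φ, hφ⟩ := h0 (X.erase p) (Finset.card_erase_lt_of_mem hp) _ _
      (cond_cut hC (connIn_insert hC.conn ha hpa) (M := {c}) (by simp))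
    refine ⟨Function.update φ p c, by simp, ?_⟩
    refine col_extend (A := A) (M := {c}) (by simp) ?_ ⟨fun v hv _ => hφ.1 v hv (by simp), hφ.2⟩
      ?_ (Or.inl rfl)
    · rintro q rfl; exact ⟨a, ha, hpa⟩
    · intro v hv hvp ho
      exact absurd ho (hq v hv hvp)

theorem t0_of {H : SimpleGraph W} {X : Finset W} (h1 : T1 H X)
    (h0 : ∀ Y : Finset W, Y.card < X.card → T0 H Y) : T0 H X := by
  classical
  intro A L hC
  by_cases hq : ∃ q ∈ X, On H A q
  · obtain ⟨q, hq, oq⟩ := hq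
    obtain ⟨c, hc⟩ : (L q).Nonempty := Finset.card_pos.1 (by have := hC.three q hq; omega)
    obtain ⟨φ, e1, hφ⟩ := h1 A L hC q hq oq c
    refine ⟨φ, ?_, hφ.2⟩
    intro v hv _
    by_cases hvq : v = q
    · subst hvq; rw [e1]; exact hc
    · exact hφ.1 v hv hvq
  · push Not at hq
    rcases X.eq_empty_or_nonempty with rfl | ⟨p, hp⟩
    · exact ⟨fun _ => 0, by simp [Col]⟩
    obtain ⟨c, hc⟩ : (L p).Nonempty := Finset.card_pos.1 (by have := hC.three p hp; omega)
    have hC' : Cond H ∅ X L := ⟨fun u hu => hu.elim, fun v _ h => h, hC.three,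
      fun v hv _ => hC.five v hv (hq v hv)⟩
    obtain ⟨φ, hφ⟩ := h0 (X.erase p) (Finset.card_erase_lt_of_mem hp) _ _
      (cond_cut hC' (p := p) (by rw [insert_empty_eq]; exact connIn_singleton H p) (M := {c})
        (by simp))
    refine ⟨Function.update φ p c, ?_⟩
    refine col_extend (A := ∅) (M := {c}) (by simp) (fun q hq => hq.elim) hφ
      ?_ (Or.inr hc)
    rintro v hv hvp ⟨a, ha, _⟩
    exact ha.elim

/-- Gluing along a separating pair of adjacent outer vertices. -/
theorem glue {H : SimpleGraph W} {X : Finset W}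
    (ih : ∀ Y : Finset W, Y.card < X.card → T2 H Y) {A : Set W} {L : W → Finset ℕ}
    (hC : Cond H A X L) {x y : W} (hx : x ∈ X) (hy : y ∈ X) (ox : On H A x) (oy : On H A y)
    (hxy : H.Adj x y) {Y Z : Finset W} (hYX : Y ⊆ X) (hZX : Z ⊆ X) (hYc : Y.card < X.card)
    (hZc : Z.card < X.card) (hxY : x ∈ Y) (hyY : y ∈ Y) (hxZ : x ∈ Z) (hyZ : y ∈ Z)
    (hU : ∀ v ∈ X, v ∈ Y ∨ v ∈ Z) (hI : ∀ v ∈ Y, v ∈ Z → v = x ∨ v = y)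
    (hE : ∀ u ∈ X, ∀ v ∈ X, H.Adj u v → (u ∈ Y ∧ v ∈ Y) ∨ (u ∈ Z ∧ v ∈ Z))
    {p1 p2 : W} (h1 : p1 ∈ Y) (h2 : p2 ∈ Y) (o1 : On H A p1) (o2 : On H A p2)
    (h12 : H.Adj p1 p2) {c1 c2 : ℕ} (hc : c1 ≠ c2) :
    ∃ φ, φ p1 = c1 ∧ φ p2 = c2 ∧ Col H X L {p1, p2} φ := by
  classical
  obtain ⟨φ, e1, e2, hφ⟩ := ih Y hYc A L (hC.mono hYX) p1 h1 p2 h2 o1 o2 h12 c1 c2 hc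
  obtain ⟨ψ, f1, f2, hψ⟩ := ih Z hZc A L (hC.mono hZX) x hxZ y hyZ ox oy hxy (φ x) (φ y)
    (hφ.2 x hxY y hyY hxy)
  have hag : ∀ v ∈ Z, (if v ∈ Y then φ v else ψ v) = ψ v := by
    intro v hv
    split_ifs with h
    · rcases hI v h hv with rfl | rfl
      · exact f1.symm
      · exact f2.symm
    · rfl
  have hagY : ∀ v ∈ Y, (if v ∈ Y then φ v else ψ v) = φ v := fun v hv => if_pos hv
  refine ⟨fun v => if v ∈ Y then φ v else ψ v, ?_, ?_, ?_, ?_⟩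
  · rw [← e1]; exact hagY _ h1
  · rw [← e2]; exact hagY _ h2
  · intro v hv hvQ
    by_cases hvY : v ∈ Y
    · simp only [hvY, if_true]; exact hφ.1 v hvY hvQ
    · simp only [hvY, if_false]
      refine hψ.1 v ((hU v hv).resolve_left hvY) ?_
      rintro (rfl | rfl)
      · exact hvY hxY
      · exact hvY hyY
  · intro u hu v hv huv
    rcases hE u hu v hv huv with ⟨h, h'⟩ | ⟨h, h'⟩
    · simp only [hagY u h, hagY v h']; exact hφ.2 u h v h' huv
    · simp only [hag u h, hag v h']; exact hψ.2 u h v h' huv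

theorem t2_of {H : SimpleGraph W} (hD : Drawable H) {X : Finset W}
    (ih : ∀ Y : Finset W, Y.card < X.card → T2 H Y)
    (ih1 : ∀ Y : Finset W, Y.card < X.card → T1 H Y) : T2 H X := by
  classical
  intro A L hC p1 hp1 p2 hp2 o1 o2 h12 c1 c2 hc
  by_contra hno
  -- no separating pair
  have hsep : ∀ x ∈ X, ∀ y ∈ X, On H A x → On H A y → H.Adj x y →
      ConnIn H ((X : Set W) \ {x, y}) := by
    intro x hx y hy ox oy hxy s hs t ht
    by_contra hst
    apply hno
    set D : Set W := (X : Set W) \ {x, y} with hDdef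
    have memD : ∀ v ∈ X, v ≠ x → v ≠ y → v ∈ D := by
      intro v hv h1 h2
      refine ⟨hv, ?_⟩
      rintro (h | h)
      · exact h1 h
      · exact h2 h
    have hDx : x ∉ D := fun h => h.2 (Or.inl rfl)
    have hDy : y ∉ D := fun h => h.2 (Or.inr rfl)
    set K := compIn H D s with hK
    have hKD : K ⊆ D := compIn_subset hs
    have htK : t ∉ K := hst
    have hsK : s ∈ K := ReflTransGen.refl
    set Y : Finset W := X.filter (fun v => v ∈ K ∨ v = x ∨ v = y) with hY
    set Z : Finset W := X.filter (fun v => v ∉ K) with hZ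
    have hYX : Y ⊆ X := Finset.filter_subset _ _
    have hZX : Z ⊆ X := Finset.filter_subset _ _
    have hYc : Y.card < X.card := by
      refine Finset.card_lt_card ((Finset.ssubset_iff_of_subset hYX).2 ⟨t, ht.1, ?_⟩)
      intro h
      rcases (Finset.mem_filter.1 h).2 with h | h | h
      · exact htK h
      · exact hDx (h ▸ ht)
      · exact hDy (h ▸ ht)
    have hZc : Z.card < X.card := by
      refine Finset.card_lt_card ((Finset.ssubset_iff_of_subset hZX).2 ⟨s, hs.1, ?_⟩)
      intro h
      exact (Finset.mem_filter.1 h).2 hsK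
    have hxY : x ∈ Y := by simp [hY, hx]
    have hyY : y ∈ Y := by simp [hY, hy]
    have hxZ : x ∈ Z := Finset.mem_filter.2 ⟨hx, fun h => hDx (hKD h)⟩
    have hyZ : y ∈ Z := Finset.mem_filter.2 ⟨hy, fun h => hDy (hKD h)⟩
    have hU : ∀ v ∈ X, v ∈ Y ∨ v ∈ Z := by
      intro v hv
      by_cases h : v ∈ K
      · exact Or.inl (Finset.mem_filter.2 ⟨hv, Or.inl h⟩)
      · exact Or.inr (Finset.mem_filter.2 ⟨hv, h⟩)
    have hI : ∀ v ∈ Y, v ∈ Z → v = x ∨ v = y := by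
      intro v h1 h2
      exact (Finset.mem_filter.1 h1).2.resolve_left (Finset.mem_filter.1 h2).2
    have hE0 : ∀ u ∈ X, ∀ v ∈ X, H.Adj u v → u ∈ K → v ∈ Y := by
      intro u hu v hv huv hk
      refine Finset.mem_filter.2 ⟨hv, ?_⟩
      by_cases h1 : v = x
      · exact Or.inr (Or.inl h1)
      by_cases h2 : v = y
      · exact Or.inr (Or.inr h2)
      have hk' : ReflTransGen (RelIn H D) s u := hk
      exact Or.inl (hk'.tail ⟨huv, hKD hk, memD v hv h1 h2⟩)
    have hE : ∀ u ∈ X, ∀ v ∈ X, H.Adj u v → (u ∈ Y ∧ v ∈ Y) ∨ (u ∈ Z ∧ v ∈ Z) := by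
      intro u hu v hv huv
      by_cases h1 : u ∈ K
      · exact Or.inl ⟨Finset.mem_filter.2 ⟨hu, Or.inl h1⟩, hE0 u hu v hv huv h1⟩
      by_cases h2 : v ∈ K
      · exact Or.inl ⟨hE0 v hv u hu huv.symm h2, Finset.mem_filter.2 ⟨hv, Or.inl h2⟩⟩
      · exact Or.inr ⟨Finset.mem_filter.2 ⟨hu, h1⟩, Finset.mem_filter.2 ⟨hv, h2⟩⟩
    rcases hE p1 hp1 p2 hp2 h12 with ⟨h, h'⟩ | ⟨h, h'⟩
    · exact glue ih hC hx hy ox oy hxy hYX hZX hYc hZc hxY hyY hxZ hyZ hU hI hE h h' o1 o2 h12 hc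
    · exact glue ih hC hx hy ox oy hxy hZX hYX hZc hYc hxZ hyZ hxY hyY
        (fun v hv => (hU v hv).symm) (fun v h1 h2 => hI v h2 h1)
        (fun u hu v hv huv => (hE u hu v hv huv).symm) h h' o1 o2 h12 hc
  apply hno
  have hQ : ∀ q ∈ ({p1, p2} : Set W), On H A q := by
    rintro q (rfl | rfl)
    · exact o1
    · exact o2
  by_cases hv0 : ∃ v ∈ X, H.Adj v p1 ∧ On H A v ∧ v ≠ p2
  · obtain ⟨v, hv, hvp, ov, hv2⟩ := hv0
    -- at most one further outer neighbor
    have hw : ∃ w, ∀ u ∈ X, H.Adj u v → On H A u → u = p1 ∨ u = w := by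
      by_contra hw
      push Not at hw
      obtain ⟨b, hb, hbv, ob, nb1, -⟩ := hw p1
      obtain ⟨c, hcX, hcv, oc, nc1, ncb⟩ := hw b
      have hmem : ∀ z ∈ X, ∀ w, z ≠ v → z ≠ w → z ∈ (X : Set W) \ {v, w} := by
        intro z hz w h1 h2
        refine ⟨hz, ?_⟩
        rintro (h | h)
        · exact h1 h
        · exact h2 h
      refine no_three hD (X := (X : Set W)) hC.conn hC.disj hv hp1 hb hcX ov o1 ob oc hvp
        hbv.symm hcv.symm nb1.symm nc1.symm ncb.symm ?_ ?_ ?_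
      · exact hsep v hv c hcX ov oc hcv.symm _ (hmem _ hp1 _ hvp.ne.symm nc1.symm) _
          (hmem _ hb _ hbv.ne ncb.symm)
      · exact hsep v hv p1 hp1 ov o1 hvp _ (hmem _ hb _ hbv.ne nb1) _
          (hmem _ hcX _ hcv.ne nc1)
      · exact hsep v hv b hb ov ob hbv.symm _ (hmem _ hcX _ hcv.ne ncb) _
          (hmem _ hp1 _ hvp.ne.symm nb1.symm)
    obtain ⟨w, hw⟩ := hw
    obtain ⟨M, hML, hM2⟩ : ∃ M ⊆ (L v).erase c1, M.card = 2 := by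
      apply Finset.exists_subset_card_eq
      have := hC.three v hv
      have := Finset.pred_card_le_card_erase (a := c1) (s := L v)
      omega
    obtain ⟨a, ha, hva⟩ := id ov
    obtain ⟨φ, e1, e2, hφ⟩ := ih (X.erase v) (Finset.card_erase_lt_of_mem hv) _ _
      (cond_cut hC (connIn_insert hC.conn ha hva) (M := M) hM2.le) p1
      (Finset.mem_erase.2 ⟨hvp.ne.symm, hp1⟩) p2 (Finset.mem_erase.2 ⟨hv2.symm, hp2⟩) o1.insert
      o2.insert h12 c1 c2 hc
    obtain ⟨m, hm, hmw⟩ : ∃ m ∈ M, m ≠ φ w := Finset.exists_mem_ne (by omega) _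
    have hmL := Finset.mem_erase.1 (hML hm)
    refine ⟨Function.update φ v m, ?_, ?_, ?_⟩
    · rw [Function.update_of_ne hvp.ne.symm]; exact e1
    · rw [Function.update_of_ne hv2.symm]; exact e2
    · refine col_extend hm hQ hφ ?_ (Or.inr hmL.2)
      intro u hu huv ou
      rcases hw u hu huv ou with rfl | rfl
      · rw [e1]; exact hmL.1.symm
      · exact hmw.symm
  · push Not at hv0
    obtain ⟨a, ha, hpa⟩ := id o1
    obtain ⟨φ, e2, hφ⟩ := ih1 (X.erase p1) (Finset.card_erase_lt_of_mem hp1) _ _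
      (cond_cut hC (connIn_insert hC.conn ha hpa) (M := {c1}) (by simp)) p2
      (Finset.mem_erase.2 ⟨h12.ne.symm, hp2⟩) o2.insert c2
    refine ⟨Function.update φ p1 c1, by simp, ?_, ?_⟩
    · rw [Function.update_of_ne h12.ne.symm]; exact e2
    · refine col_extend (A := A) (M := {c1}) (by simp) hQ
        ⟨fun v hv hvQ => hφ.1 v hv (fun h => hvQ (Or.inr h)), hφ.2⟩ ?_ (Or.inl (Or.inl rfl))
      intro v hv hvp ov
      rw [hv0 v hv hvp ov, e2]
      exact hc.symm

theorem t2_all {H : SimpleGraph W} (hD : Drawable H) (X : Finset W) : T2 H X := by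
  have key : ∀ n : ℕ, ∀ X : Finset W, X.card = n → T2 H X ∧ T1 H X ∧ T0 H X := by
    intro n
    induction n using Nat.strong_induction_on with
    | _ n ih =>
      intro X hX
      subst hX
      have h2 : T2 H X := t2_of hD (fun Y h => (ih _ h Y rfl).1) (fun Y h => (ih _ h Y rfl).2.1)
      have h1 : T1 H X := t1_of h2 (fun Y h => (ih _ h Y rfl).2.2)
      exact ⟨h2, h1, t0_of h1 (fun Y h => (ih _ h Y rfl).2.2)⟩
  exact (key _ X rfl).1

end Thomassen

section Topology

open Topology

theorem preconnected_outside (r : ℝ) (hr : 0 ≤ r) : IsPreconnected {z : ℝ × ℝ | r < ‖z‖} := by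
  have hrank : 1 < Module.rank ℝ (ℝ × ℝ) := by
    rw [rank_prod', Module.rank_self]
    norm_num
  have h0 := (isConnected_compl_singleton_of_one_lt_rank hrank (0 : ℝ × ℝ)).isPreconnected
  have him : {z : ℝ × ℝ | r < ‖z‖} = (fun z : ℝ × ℝ => (1 + r / ‖z‖) • z) '' {0}ᶜ := by
    ext z
    constructor
    · intro hz
      have hz' : r < ‖z‖ := hz
      have hzp : 0 < ‖z‖ := lt_of_le_of_lt hr hz'
      have hs : 0 < ‖z‖ - r := by linarith
      refine ⟨((‖z‖ - r) / ‖z‖) • z, ?_, ?_⟩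
      · simp only [Set.mem_compl_iff, Set.mem_singleton_iff, smul_eq_zero, not_or]
        exact ⟨by positivity, norm_pos_iff.1 hzp⟩
      · have hn : ‖((‖z‖ - r) / ‖z‖) • z‖ = ‖z‖ - r := by
          rw [norm_smul, Real.norm_of_nonneg (by positivity)]
          field_simp
        simp only [hn, smul_smul]
        have : (1 + r / (‖z‖ - r)) * ((‖z‖ - r) / ‖z‖) = 1 := by
          field_simp
          ring
        rw [this, one_smul]
    · rintro ⟨w, hw, rfl⟩
      have hwp : 0 < ‖w‖ := norm_pos_iff.2 hw
      show r < ‖(1 + r / ‖w‖) • w‖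
      rw [norm_smul, Real.norm_of_nonneg (by positivity)]
      have : (1 + r / ‖w‖) * ‖w‖ = ‖w‖ + r := by field_simp
      rw [this]
      linarith
  rw [him]
  refine h0.image _ ?_
  intro z hz
  have : ‖z‖ ≠ 0 := norm_ne_zero_iff.2 hz
  apply ContinuousAt.continuousWithinAt
  fun_prop (disch := exact this)

theorem outer_component {K : Set (ℝ × ℝ)} (hK : IsCompact K) :
    ∃ q, q ∈ Kᶜ ∧ {p | p ∉ K ∧ ¬Bornology.IsBounded (connectedComponentIn Kᶜ p)} =
      connectedComponentIn Kᶜ q := by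
  obtain ⟨r, hr0, hr⟩ := hK.isBounded.subset_closedBall_lt 0 0
  set E : Set (ℝ × ℝ) := {z | r < ‖z‖} with hE
  have hEK : E ⊆ Kᶜ := by
    intro z hz hzK
    have := hr hzK
    rw [mem_closedBall_zero_iff] at this
    exact absurd hz (not_lt.2 this)
  have hub : ∀ s : Set (ℝ × ℝ), ¬ Bornology.IsBounded s → (s ∩ E).Nonempty := by
    intro s hs
    by_contra hne
    apply hs
    refine (Metric.isBounded_closedBall (x := (0 : ℝ × ℝ)) (r := r)).subset ?_
    intro z hz
    rw [mem_closedBall_zero_iff]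
    by_contra h
    exact hne ⟨z, hz, not_le.1 h⟩
  obtain ⟨q, -, hq⟩ := hub Set.univ (NormedSpace.unbounded_univ ℝ (ℝ × ℝ))
  have hEunb : ¬ Bornology.IsBounded E := by
    intro h
    apply NormedSpace.unbounded_univ ℝ (ℝ × ℝ)
    refine (h.union (Metric.isBounded_closedBall (x := (0 : ℝ × ℝ)) (r := r))).subset ?_
    intro z _
    by_cases hz : r < ‖z‖
    · exact Or.inl hz
    · right; rw [mem_closedBall_zero_iff]; exact not_lt.1 hz
  have hEq : E ⊆ connectedComponentIn Kᶜ q :=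
    (preconnected_outside r hr0.le).subset_connectedComponentIn hq hEK
  refine ⟨q, hEK hq, ?_⟩
  ext p
  constructor
  · rintro ⟨hp, hpb⟩
    obtain ⟨z, hz, hzE⟩ := hub _ hpb
    have e1 := connectedComponentIn_eq hz
    have e2 := connectedComponentIn_eq (hEq hzE)
    rw [e2, ← e1]
    exact mem_connectedComponentIn hp
  · intro hp
    refine ⟨connectedComponentIn_subset _ _ hp, ?_⟩
    rw [← connectedComponentIn_eq hp]
    exact fun h => hEunb (h.subset hEq)

variable {V : Type u}

theorem arc_compact (G : PlaneGraph V) {u v : V} (h : G.Adj u v) : IsCompact (G.arc s(u, v)) := by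
  obtain ⟨f, hf, -, him, -, -⟩ := G.arc_arc u v h
  rw [← him]
  exact isCompact_Icc.image_of_continuousOn hf

theorem part_compact (G : PlaneGraph V) (E : Set (V × V)) (hE : ∀ p ∈ E, G.Adj p.1 p.2) :
    IsCompact (G.pos '' G.verts ∪ ⋃ p ∈ E, G.arc s(p.1, p.2)) := by
  refine (G.finite_verts.image _).isCompact.union ?_
  have hfin : E.Finite := by
    refine (G.finite_verts.prod G.finite_verts).subset ?_
    rintro ⟨u, v⟩ h
    exact ⟨G.adj_mem u v (hE _ h), G.adj_mem v u (G.adj_symm _ _ (hE _ h))⟩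
  exact hfin.isCompact_biUnion fun p hp => arc_compact G (hE p hp)

theorem pg_image_eq (G : PlaneGraph V) :
    G.image = G.pos '' G.verts ∪ ⋃ p ∈ {p : V × V | G.Adj p.1 p.2}, G.arc s(p.1, p.2) := by
  unfold PlaneGraph.image
  congr 1
  ext z
  simp only [Set.mem_iUnion, Set.mem_ofPred_eq, Prod.exists, exists_prop]

theorem image_compact (G : PlaneGraph V) : IsCompact G.image := by
  rw [pg_image_eq]
  exact part_compact G _ fun p hp => hp

theorem arc_subset_image (G : PlaneGraph V) {u v : V} (h : G.Adj u v) :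
    G.arc s(u, v) ⊆ G.image := by
  intro z hz
  rw [pg_image_eq]
  exact Or.inr (Set.mem_biUnion (x := (u, v)) h hz)

theorem outer_path (G : PlaneGraph V) : IsPathConnected G.outerFace := by
  obtain ⟨q, hq, h⟩ := outer_component (image_compact G)
  have h' : G.outerFace = connectedComponentIn G.imageᶜ q := h
  rw [h']
  have ho : IsOpen (connectedComponentIn G.imageᶜ q) :=
    (image_compact G).isClosed.isOpen_compl.connectedComponentIn
  exact ho.isConnected_iff_isPathConnected.1 (isConnected_connectedComponentIn_iff.2 hq)

theorem outer_of_preconnected (G : PlaneGraph V) {q : ℝ × ℝ} (hq : q ∈ G.outerFace)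
    {s : Set (ℝ × ℝ)} (hs : IsPreconnected s) (hqs : q ∈ s) (hsub : s ⊆ G.imageᶜ) :
    s ⊆ G.outerFace := by
  intro z hz
  refine ⟨hsub hz, ?_⟩
  have := hs.subset_connectedComponentIn hqs hsub hz
  rw [← connectedComponentIn_eq this]
  exact hq.2

theorem access (G : PlaneGraph V) {v w : V} (h : G.Adj v w)
    (hF : G.arc s(v, w) ⊆ frontier G.outerFace) :
    ∃ T ⊆ G.arc s(v, w), G.pos w ∉ T ∧
      ∀ p ∈ G.outerFace, JoinedIn (G.outerFace ∪ T) p (G.pos v) := by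
  obtain ⟨f, hf, hinj, him, h0, h1⟩ := G.arc_arc v w h
  set E : Set (V × V) := {p | G.Adj p.1 p.2 ∧ s(p.1, p.2) ≠ s(v, w)} with hE
  set K : Set (ℝ × ℝ) := G.pos '' G.verts ∪ ⋃ p ∈ E, G.arc s(p.1, p.2) with hK
  have hKc : IsClosed K := (part_compact G E fun p hp => hp.1).isClosed
  set m := f (1 / 2) with hm
  have hhalf : (1 / 2 : ℝ) ∈ Set.Icc (0 : ℝ) 1 := by norm_num
  have hmarc : m ∈ G.arc s(v, w) := him ▸ Set.mem_image_of_mem f hhalf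
  have hmv : m ≠ G.pos v := by
    intro e
    rw [← h0] at e
    have := hinj hhalf (by norm_num) e
    norm_num at this
  have hmw : m ≠ G.pos w := by
    intro e
    rw [← h1] at e
    have := hinj hhalf (by norm_num) e
    norm_num at this
  have hmK : m ∉ K := by
    rintro (⟨x, hx, e⟩ | hx)
    · rcases G.arc_avoid v w h x hx (e ▸ hmarc) with rfl | rfl
      · exact hmv e.symm
      · exact hmw e.symm
    · simp only [Set.mem_iUnion] at hx
      obtain ⟨p, hp, hx⟩ := hx
      obtain ⟨x, ⟨-, hx'⟩, e⟩ := G.arc_meet p.1 p.2 v w hp.1 h hp.2 ⟨hx, hmarc⟩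
      rcases hx' with rfl | rfl
      · exact hmv e.symm
      · exact hmw e.symm
  obtain ⟨ε, hε, hball⟩ := Metric.isOpen_iff.1 hKc.isOpen_compl m hmK
  obtain ⟨q, hqF, hqd⟩ := Metric.mem_closure_iff.1 (frontier_subset_closure (hF hmarc)) ε hε
  have hq : q ∈ Metric.ball m ε := by rw [Metric.mem_ball, dist_comm]; exact hqd
  set γ : ℝ → ℝ × ℝ := fun t => AffineMap.lineMap q m t with hγ
  have hγc : Continuous γ := AffineMap.lineMap_continuous
  have hγ0 : γ 0 = q := by simp [hγ]
  have hγ1 : γ 1 = m := by simp [hγ]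
  have hγb : ∀ t ∈ Set.Icc (0 : ℝ) 1, γ t ∈ Metric.ball m ε := by
    intro t ht
    exact (convex_ball m ε).lineMap_mem hq (Metric.mem_ball_self hε) ht
  set Q : Set ℝ := Set.Icc 0 1 ∩ γ ⁻¹' G.image with hQ
  have hQc : IsCompact Q :=
    isCompact_Icc.inter_right ((image_compact G).isClosed.preimage hγc)
  have hQn : Q.Nonempty := ⟨1, by norm_num, by
    rw [Set.mem_preimage, hγ1]; exact arc_subset_image G h hmarc⟩
  obtain ⟨t0, ht0, hmin⟩ := hQc.exists_isLeast hQn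
  have hlt : ∀ t ∈ Set.Icc (0 : ℝ) 1, t < t0 → γ t ∈ G.imageᶜ := by
    intro t ht htt hi
    exact absurd (hmin ⟨ht, hi⟩) (not_le.2 htt)
  have hltF : ∀ t ∈ Set.Icc (0 : ℝ) 1, t < t0 → γ t ∈ G.outerFace := by
    intro t ht htt
    have hsub : γ '' Set.Icc 0 t ⊆ G.imageᶜ := by
      rintro _ ⟨s, hs, rfl⟩
      exact hlt s ⟨hs.1, hs.2.trans ht.2⟩ (lt_of_le_of_lt hs.2 htt)
    refine outer_of_preconnected G hqF (isPreconnected_Icc.image γ hγc.continuousOn) ?_ hsub ?_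
    · exact ⟨0, ⟨le_rfl, ht.1⟩, hγ0⟩
    · exact ⟨t, ⟨ht.1, le_rfl⟩, rfl⟩
  have hyK : γ t0 ∉ K := hball (hγb t0 ht0.1)
  have hyarc : γ t0 ∈ G.arc s(v, w) := by
    have hy : γ t0 ∈ G.image := ht0.2
    rw [pg_image_eq] at hy
    rcases hy with hy | hy
    · exact absurd (Or.inl hy) hyK
    · simp only [Set.mem_iUnion] at hy
      obtain ⟨p, hp, hy⟩ := hy
      by_cases e : s(p.1, p.2) = s(v, w)
      · rw [e] at hy; exact hy
      · refine absurd (Or.inr ?_) hyK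
        exact Set.mem_biUnion (x := p) ⟨hp, e⟩ hy
  rw [← him] at hyarc
  obtain ⟨s, hs, hsy⟩ := hyarc
  have hs1 : s ≠ 1 := by
    rintro rfl
    apply hyK
    rw [← hsy, h1]
    exact Or.inl ⟨w, G.adj_mem w v (G.adj_symm _ _ h), rfl⟩
  have hsub1 : Set.Icc 0 s ⊆ Set.Icc (0 : ℝ) 1 := Set.Icc_subset_Icc_right hs.2
  refine ⟨f '' Set.Icc 0 s, ?_, ?_, ?_⟩
  · rw [← him]; exact Set.image_mono hsub1
  · rintro ⟨t, ht, e⟩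
    rw [← h1] at e
    have := hinj (hsub1 ht) (by norm_num) e
    exact hs1 (le_antisymm hs.2 (this ▸ ht.2))
  · intro p hp
    have j1 : JoinedIn (G.outerFace ∪ f '' Set.Icc 0 s) p q :=
      ((outer_path G).joinedIn p hp q hqF).mono Set.subset_union_left
    have j2 : JoinedIn (G.outerFace ∪ f '' Set.Icc 0 s) q (γ t0) := by
      have hpc : IsPathConnected (γ '' Set.Icc 0 t0) :=
        ((convex_Icc (0 : ℝ) t0).isPathConnected ⟨0, le_rfl, ht0.1.1⟩).image hγc
      refine (hpc.joinedIn q ⟨0, ⟨le_rfl, ht0.1.1⟩, hγ0⟩ (γ t0)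
        ⟨t0, ⟨ht0.1.1, le_rfl⟩, rfl⟩).mono ?_
      rintro _ ⟨t, ht, rfl⟩
      rcases lt_or_eq_of_le ht.2 with h | rfl
      · exact Or.inl (hltF t ⟨ht.1, ht.2.trans ht0.1.2⟩ h)
      · exact Or.inr ⟨s, ⟨hs.1, le_rfl⟩, hsy⟩
    have j3 : JoinedIn (G.outerFace ∪ f '' Set.Icc 0 s) (γ t0) (G.pos v) := by
      have hpc : IsPathConnected (f '' Set.Icc 0 s) :=
        ((convex_Icc (0 : ℝ) s).isPathConnected ⟨0, le_rfl, hs.1⟩).image' (hf.mono hsub1)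
      exact (hpc.joinedIn _ ⟨s, ⟨hs.1, le_rfl⟩, hsy⟩ _ ⟨0, ⟨le_rfl, hs.1⟩, h0⟩).mono
        Set.subset_union_right
    exact (j1.trans j2).trans j3

theorem arc_joined (G : PlaneGraph V) {u v : V} (h : G.Adj u v) :
    JoinedIn (G.arc s(u, v)) (G.pos u) (G.pos v) := by
  obtain ⟨f, hf, -, him, h0, h1⟩ := G.arc_arc u v h
  have hpc : IsPathConnected (f '' Set.Icc 0 1) :=
    ((convex_Icc (0 : ℝ) 1).isPathConnected ⟨0, by norm_num⟩).image' hf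
  rw [← him]
  exact hpc.joinedIn _ ⟨0, by norm_num, h0⟩ _ ⟨1, by norm_num, h1⟩

/-- The graph of `G` with an additional vertex joined to all of `C`. -/
def apexGraph (G : PlaneGraph V) (C : List V) : SimpleGraph (Option V) where
  Adj x y := match x, y with
    | none, none => False
    | none, some v => v ∈ C
    | some v, none => v ∈ C
    | some u, some v => G.Adj u v
  symm := ⟨by
    rintro (_ | u) (_ | v) h
    · exact h
    · exact h
    · exact h
    · exact G.adj_symm _ _ h⟩
  loopless := ⟨by
    rintro (_ | u) h
    · exact h
    · exact G.adj_irrefl _ h⟩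

theorem drawable_transfer {W : Type*} (H : SimpleGraph W) (x : W → ℝ × ℝ)
    (S : W → W → Set (ℝ × ℝ)) (hj : ∀ u v, H.Adj u v → JoinedIn (S u v) (x u) (x v))
    (hd : ∀ u v a b, H.Adj u v → H.Adj a b → u ≠ a → u ≠ b → v ≠ a → v ≠ b →
      Disjoint (S u v) (S a b)) : Drawable H := by
  set e := Complex.equivRealProdCLM.symm with he
  refine ⟨fun w => e (x w), fun u v => e '' S u v, ?_, ?_⟩
  · intro u v h
    obtain ⟨γ, hγ⟩ := hj u v h
    exact ⟨γ.map e.continuous, fun t => ⟨γ t, hγ t, rfl⟩⟩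
  · intro u v a b h1 h2 h3 h4 h5 h6
    exact (Set.disjoint_image_iff e.injective).2 (hd u v a b h1 h2 h3 h4 h5 h6)

theorem apex_drawable (G : PlaneGraph V) (C : List V) (hC : G.IsOuterCycle C) :
    Drawable (apexGraph G C) := by
  classical
  obtain ⟨-, -, -, hadj, hfr⟩ := hC
  have hacc : ∀ v : V, ∃ (w : V) (T : Set (ℝ × ℝ)), v ∈ C → G.Adj v w ∧ T ⊆ G.arc s(v, w) ∧
      G.pos w ∉ T ∧ ∀ p ∈ G.outerFace, JoinedIn (G.outerFace ∪ T) p (G.pos v) := by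
    intro v
    by_cases hv : v ∈ C
    · obtain ⟨i, rfl⟩ := List.mem_iff_get.1 hv
      obtain ⟨T, h1, h2, h3⟩ := access G (hadj i) (by
        rw [hfr]
        exact fun z hz => Or.inr (Set.mem_iUnion.2 ⟨i, hz⟩))
      exact ⟨_, T, fun _ => ⟨hadj i, h1, h2, h3⟩⟩
    · exact ⟨v, ∅, fun h => absurd h hv⟩
  choose w T hT using hacc
  obtain ⟨p0, hp0⟩ := (outer_path G).nonempty
  have hkey : ∀ v a b, v ∈ C → G.Adj a b → v ≠ a → v ≠ b →
      Disjoint (G.outerFace ∪ T v) (G.arc s(a, b)) := by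
    intro v a b hv hab hva hvb
    obtain ⟨h1, h2, h3, -⟩ := hT v hv
    rw [Set.disjoint_left]
    rintro z (hz | hz) hz'
    · exact hz.1 (arc_subset_image G hab hz')
    · have hne : s(v, w v) ≠ s(a, b) := by
        intro e
        have : v ∈ s(a, b) := e ▸ Sym2.mem_mk_left _ _
        rcases Sym2.mem_iff.1 this with h | h
        · exact hva h
        · exact hvb h
      obtain ⟨x, ⟨hx, hx'⟩, e⟩ := G.arc_meet _ _ _ _ h1 hab hne ⟨h2 hz, hz'⟩
      rcases hx with rfl | rfl
      · rcases hx' with h | h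
        · exact hva h
        · exact hvb h
      · rw [e] at h3
        exact h3 hz
  refine drawable_transfer _ (fun x => match x with
    | none => p0
    | some v => G.pos v) (fun x y => match x, y with
    | none, none => ∅
    | none, some v => G.outerFace ∪ T v
    | some v, none => G.outerFace ∪ T v
    | some u, some v => G.arc s(u, v)) ?_ ?_
  · rintro (_ | u) (_ | v) h
    · exact h.elim
    · exact (hT v h).2.2.2 p0 hp0
    · exact ((hT u h).2.2.2 p0 hp0).symm
    · exact arc_joined G h
  · rintro (_ | u) (_ | v) (_ | a) (_ | b) h1 h2 h3 h4 h5 h6 <;>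
      first | (exact absurd rfl h3) | (exact absurd rfl h4) | (exact absurd rfl h5) |
        (exact absurd rfl h6) | (exact h1.elim) | (exact h2.elim) | skip
    · exact hkey v a b h1 h2 (fun e => h5 (e ▸ rfl)) (fun e => h6 (e ▸ rfl))
    · exact hkey u a b h1 h2 (fun e => h3 (e ▸ rfl)) (fun e => h4 (e ▸ rfl))
    · exact (hkey b u v h2 h1 (fun e => h4 (e ▸ rfl)) (fun e => h6 (e ▸ rfl))).symm
    · exact (hkey a u v h2 h1 (fun e => h3 (e ▸ rfl)) (fun e => h5 (e ▸ rfl))).symm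
    · have n1 : u ≠ a := fun e => h3 (e ▸ rfl)
      have n2 : u ≠ b := fun e => h4 (e ▸ rfl)
      have n3 : v ≠ a := fun e => h5 (e ▸ rfl)
      have n4 : v ≠ b := fun e => h6 (e ▸ rfl)
      rw [Set.disjoint_left]
      intro z hz hz'
      have hne : s(u, v) ≠ s(a, b) := by
        intro e
        have : u ∈ s(a, b) := e ▸ Sym2.mem_mk_left _ _
        rcases Sym2.mem_iff.1 this with h | h
        · exact n1 h
        · exact n2 h
      obtain ⟨x, ⟨hx, hx'⟩, -⟩ := G.arc_meet _ _ _ _ h1 h2 hne ⟨hz, hz'⟩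
      rcases hx with rfl | rfl <;> rcases hx' with h | h
      · exact n1 h
      · exact n2 h
      · exact n3 h
      · exact n4 h

end Topology

/-- Thomassen's theorem, Theorem 1.1:
Let `G` be a plane graph with outer cycle `C`, let `P = p₁p₂` be a path of
length one contained in `C`, and let `L` be a list assignment for `G` with
`|L(v)| ≥ 5` for `v ∈ V(G) − V(C)`, `|L(v)| ≥ 3` for `v ∈ V(C) − V(P)`,
`|L(p₁)| ≥ 1`, `|L(p₂)| ≥ 1` and `L(p₁) ≠ L(p₂)`. Then `G` has an
`L`-coloring. -/
theorem thomassen_path_of_length_one {V : Type u} (G : PlaneGraph V) (C : List V)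
    (p1 p2 : V) (L : V → Finset ℕ)
    (hC : G.IsOuterCycle C)
    (hp1 : p1 ∈ C) (hp2 : p2 ∈ C) (hp12 : p1 ≠ p2)
    (hP : IsCycleEdge C p1 p2)
    (hnonempty : ∀ v ∈ G.verts, (L v).Nonempty)
    (h5 : ∀ v ∈ G.verts, v ∉ C → 5 ≤ (L v).card)
    (h3 : ∀ v ∈ C, v ≠ p1 → v ≠ p2 → 3 ≤ (L v).card)
    (h1 : 1 ≤ (L p1).card) (h2 : 1 ≤ (L p2).card)
    (hLne : L p1 ≠ L p2) :
    G.HasLColoring L := by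
  classical
  obtain ⟨c1, hc1, c2, hc2, hc⟩ : ∃ c1 ∈ L p1, ∃ c2 ∈ L p2, c1 ≠ c2 := by
    by_contra hno
    push Not at hno
    obtain ⟨a, ha⟩ := Finset.card_pos.1 h1
    obtain ⟨b, hb⟩ := Finset.card_pos.1 h2
    apply hLne
    ext z
    constructor
    · intro hz; rw [hno z hz b hb]; exact hb
    · intro hz; rw [← hno a ha z hz]; exact ha
  have hD := apex_drawable G C hC
  have hadj : G.Adj p1 p2 := by
    obtain ⟨i, hi⟩ := hP
    have h := hC.2.2.2.1 i
    rcases Sym2.eq_iff.1 hi with ⟨e1, e2⟩ | ⟨e1, e2⟩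
    · rw [e1, e2]; exact h
    · rw [e1, e2]; exact G.adj_symm _ _ h
  set X : Finset (Option V) := G.finite_verts.toFinset.image some with hX
  have memX : ∀ v ∈ G.verts, some v ∈ X := fun v hv =>
    Finset.mem_image_of_mem _ (G.finite_verts.mem_toFinset.2 hv)
  have ofX : ∀ x ∈ X, ∃ v ∈ G.verts, x = some v := by
    intro x hx
    obtain ⟨v, hv, rfl⟩ := Finset.mem_image.1 hx
    exact ⟨v, G.finite_verts.mem_toFinset.1 hv, rfl⟩
  have hon : ∀ v ∈ C, On (apexGraph G C) {none} (some v) := fun v hv => ⟨none, rfl, hv⟩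
  have hCond : Cond (apexGraph G C) {none} X (fun x => match x with
      | none => ∅
      | some v => if v = p1 ∨ v = p2 then Finset.range 5 else L v) := by
    refine ⟨connIn_singleton _ _, ?_, ?_, ?_⟩
    · intro x hx
      obtain ⟨v, hv, rfl⟩ := ofX x hx
      simp
    · intro x hx
      obtain ⟨v, hv, rfl⟩ := ofX x hx
      dsimp only
      split_ifs with h
      · simp
      · push Not at h
        by_cases hvC : v ∈ C
        · exact h3 v hvC h.1 h.2
        · exact le_trans (by norm_num) (h5 v hv hvC)
    · intro x hx ho
      obtain ⟨v, hv, rfl⟩ := ofX x hx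
      dsimp only
      split_ifs with h
      · simp
      · exact h5 v hv fun h => ho (hon v h)
  obtain ⟨φ, e1, e2, hφ⟩ := t2_all hD X {none} _ hCond (some p1) (memX _ (hC.2.2.1 _ hp1))
    (some p2) (memX _ (hC.2.2.1 _ hp2)) (hon _ hp1) (hon _ hp2) hadj c1 c2 hc
  refine ⟨fun v => φ (some v), ?_, ?_⟩
  · intro v hv
    by_cases h1 : v = p1
    · subst h1; dsimp only; rw [e1]; exact hc1
    by_cases h2 : v = p2
    · subst h2; dsimp only; rw [e2]; exact hc2
    have := hφ.1 (some v) (memX v hv) (by simp [h1, h2])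
    simpa [h1, h2] using this
  · intro u v huv
    exact hφ.2 (some u) (memX u (G.adj_mem _ _ huv)) (some v)
      (memX v (G.adj_mem _ _ (G.adj_symm _ _ huv))) huv
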